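/- arXiv:1610.06760 — 8 statements merged into one kernel-verified Lean document; each statement's English description precedes it below -/
import Mathlib

section
/- Let ν be a probability measure on the interval [0,2π] and let λ be a real number. Then for all positive integers n and m, the quantity |λ·(∫₀^{2π} e^{int} dν(t))·(∫₀^{2π} e^{imt} dν(t)) − ∫₀^{2π} e^{i(n+m)t} dν(t)| is at most 1 when 0 ≤ λ ≤ 2, and is at most |λ − 1| when λ < 0 or λ > 2. -/
open MeasureTheory

lemma key_two {X : Type*} [MeasurableSpace X] (ν : Measure X) [IsProbabilityMeasure ν]
    (f g : X → ℂ) (hf : Integrable f ν) (hg : Integrable g ν)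
    (hfg : Integrable (fun t => f t * g t) ν)
    (nf : ∀ t, ‖f t‖ = 1) (ng : ∀ t, ‖g t‖ = 1) :
    ‖2 * (∫ t, f t ∂ν) * (∫ t, g t ∂ν) - ∫ t, f t * g t ∂ν‖ ≤ 1 := by
  set b := ∫ t, g t ∂ν with hb
  have e : 2 * (∫ t, f t ∂ν) * b - ∫ t, f t * g t ∂ν
      = ∫ t, (f t * (2 * b) - f t * g t) ∂ν := by
    rw [integral_sub (hf.mul_const _) hfg, integral_mul_const]
    ring
  have hre : ∫ t, (g t).re ∂ν = b.re := by
    simpa using integral_re (𝕜 := ℂ) hg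
  have him : ∫ t, (g t).im ∂ν = b.im := by
    simpa using integral_im (𝕜 := ℂ) hg
  have ire : Integrable (fun t => (g t).re) ν := by simpa using hg.re
  have iim : Integrable (fun t => (g t).im) ν := by simpa using hg.im
  have i1 : Integrable (fun t => 2 * b.re * (g t).re) ν := ire.const_mul _
  have i2 : Integrable (fun t => 2 * b.im * (g t).im) ν := iim.const_mul _
  have i0 : Integrable (fun _ : X => 1 + 2 * (b.re ^ 2 + b.im ^ 2)) ν := integrable_const _
  have i3 : Integrable (fun t => 1 + 2 * (b.re ^ 2 + b.im ^ 2) - 2 * b.re * (g t).re) ν :=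
    i0.sub i1
  rw [e]
  calc _ ≤ ∫ t, (1 + 2 * (b.re ^ 2 + b.im ^ 2) - 2 * b.re * (g t).re
            - 2 * b.im * (g t).im) ∂ν := by
        apply norm_integral_le_of_norm_le (i3.sub i2)
        refine Filter.Eventually.of_forall fun t => ?_
        rw [← mul_sub, norm_mul, nf, one_mul]
        have h1 : ‖2 * b - g t‖ ^ 2
            = (2 * b.re - (g t).re) ^ 2 + (2 * b.im - (g t).im) ^ 2 := by
          rw [Complex.sq_norm, Complex.normSq_apply]
          simp
          ring
        have h2 : (g t).re ^ 2 + (g t).im ^ 2 = 1 := by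
          have := Complex.sq_norm (g t)
          rw [ng, Complex.normSq_apply] at this
          linarith
        simp only [Pi.sub_apply]
        nlinarith [sq_nonneg (‖2 * b - g t‖ - 1)]
    _ = 1 := by
        rw [integral_sub i3 i2, integral_sub i0 i1, integral_const_mul, integral_const_mul,
          hre, him]
        simp
        ring

lemma norm_integral_le_one' {X : Type*} [MeasurableSpace X] (ν : Measure X)
    [IsProbabilityMeasure ν] (f : X → ℂ) (nf : ∀ t, ‖f t‖ = 1) : ‖∫ t, f t ∂ν‖ ≤ 1 := by
  have := norm_integral_le_of_norm_le_const (μ := ν) (f := f) (C := 1)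
    (Filter.Eventually.of_forall fun t => (nf t).le)
  simpa using this

lemma alg_part (a b c : ℂ) (l : ℝ) (ha : ‖a‖ ≤ 1) (hb : ‖b‖ ≤ 1) (hc : ‖c‖ ≤ 1)
    (h2 : ‖2 * a * b - c‖ ≤ 1) :
    (0 ≤ l ∧ l ≤ 2 → ‖(l : ℂ) * a * b - c‖ ≤ 1) ∧
    (l < 0 ∨ 2 < l → ‖(l : ℂ) * a * b - c‖ ≤ |l - 1|) := by
  have hab : ‖a * b‖ ≤ 1 := by
    rw [norm_mul]; exact mul_le_one₀ ha (norm_nonneg _) hb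
  refine ⟨fun ⟨h0, h1⟩ => ?_, fun h => ?_⟩
  · have e : (l : ℂ) * a * b - c
        = ((l / 2 : ℝ) : ℂ) * (2 * a * b - c) - ((1 - l / 2 : ℝ) : ℂ) * c := by
      push_cast; ring
    rw [e]
    refine (norm_sub_le _ _).trans ?_
    rw [norm_mul, norm_mul, Complex.norm_real, Complex.norm_real, Real.norm_eq_abs,
      Real.norm_eq_abs, abs_of_nonneg (by linarith), abs_of_nonneg (by linarith)]
    nlinarith
  · rcases h with h | h
    · rw [abs_of_neg (by linarith), mul_assoc]
      refine (norm_sub_le _ _).trans ?_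
      rw [norm_mul, Complex.norm_real, Real.norm_eq_abs, abs_of_neg h]
      nlinarith
    · rw [abs_of_pos (by linarith)]
      have e : (l : ℂ) * a * b - c
          = ((l - 2 : ℝ) : ℂ) * (a * b) + (2 * a * b - c) := by
        push_cast; ring
      rw [e]
      refine (norm_add_le _ _).trans ?_
      rw [norm_mul, Complex.norm_real, Real.norm_eq_abs, abs_of_pos (by linarith)]
      nlinarith

theorem generalized_zalcman_measure_lemma
    (ν : Measure (Set.Icc (0 : ℝ) (2 * Real.pi))) [IsProbabilityMeasure ν]
    (lam : ℝ) (n m : ℕ) (hn : 1 ≤ n) (hm : 1 ≤ m) :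
    (0 ≤ lam ∧ lam ≤ 2 →
      ‖(lam : ℂ) * (∫ t, Complex.exp (Complex.I * n * ((t : ℝ) : ℂ)) ∂ν) *
          (∫ t, Complex.exp (Complex.I * m * ((t : ℝ) : ℂ)) ∂ν) -
        ∫ t, Complex.exp (Complex.I * (n + m) * ((t : ℝ) : ℂ)) ∂ν‖ ≤ 1) ∧
    (lam < 0 ∨ 2 < lam →
      ‖(lam : ℂ) * (∫ t, Complex.exp (Complex.I * n * ((t : ℝ) : ℂ)) ∂ν) *
          (∫ t, Complex.exp (Complex.I * m * ((t : ℝ) : ℂ)) ∂ν) -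
        ∫ t, Complex.exp (Complex.I * (n + m) * ((t : ℝ) : ℂ)) ∂ν‖ ≤ |lam - 1|) := by
  have nrm : ∀ (k : ℕ) (t : Set.Icc (0 : ℝ) (2 * Real.pi)),
      ‖Complex.exp (Complex.I * k * ((t : ℝ) : ℂ))‖ = 1 := by
    intro k t
    rw [Complex.norm_exp]
    simp
  have int : ∀ k : ℕ, Integrable (fun t : Set.Icc (0 : ℝ) (2 * Real.pi) =>
      Complex.exp (Complex.I * k * ((t : ℝ) : ℂ))) ν := by
    intro k
    refine Integrable.of_bound (C := 1) ?_ (Filter.Eventually.of_forall fun t => (nrm k t).le)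
    exact (by fun_prop : Continuous _).aestronglyMeasurable
  have e : ∀ t : Set.Icc (0 : ℝ) (2 * Real.pi),
      Complex.exp (Complex.I * (n + m) * ((t : ℝ) : ℂ))
      = Complex.exp (Complex.I * n * ((t : ℝ) : ℂ))
        * Complex.exp (Complex.I * m * ((t : ℝ) : ℂ)) := by
    intro t
    rw [← Complex.exp_add]
    congr 1
    ring
  have hfg := int (n + m)
  have nfg := nrm (n + m)
  push_cast at hfg nfg
  simp only [e] at hfg nfg ⊢
  exact alg_part _ _ _ lam (norm_integral_le_one' ν _ (nrm n))
    (norm_integral_le_one' ν _ (nrm m)) (norm_integral_le_one' ν _ nfg)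
    (key_two ν _ _ (int n) (int m) hfg (nrm n) (nrm m))
end

section
/- Fix a real number α < 1 and for n ≥ 2 set A_n = (1/(n−1)!)·∏_{j=0}^{n−2} (2(1−α)+j), with A_1 = 1. Suppose the complex numbers (a_n)_{n≥2} satisfy a_n = A_n · ∫₀^{2π} e^{i(n−1)t} dν(t) for all n ≥ 2, for some probability measure ν on [0,2π]. Then for every real λ and all integers n, m ≥ 2: |λ a_n a_m − a_{n+m−1}| ≤ A_{n+m−1} whenever 0 ≤ λ ≤ 2A_{n+m−1}/(A_n A_m), and |λ a_n a_m − a_{n+m−1}| ≤ |λ A_n A_m − A_{n+m−1}| whenever λ < 0 or λ > 2A_{n+m−1}/(A_n A_m). -/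
open MeasureTheory

theorem zalcman_two {Ω : Type*} [MeasurableSpace Ω] (ν : Measure Ω) [IsProbabilityMeasure ν]
    (f g : Ω → ℂ) (hf : Integrable f ν) (hg : Integrable g ν)
    (hfg : Integrable (fun t => f t * g t) ν)
    (nf : ∀ t, ‖f t‖ = 1) (ng : ∀ t, ‖g t‖ = 1) :
    ‖2 * ((∫ t, f t ∂ν) * (∫ t, g t ∂ν)) - ∫ t, f t * g t ∂ν‖ ≤ 1 := by
  set c := ∫ t, f t ∂ν with hc
  have h1 : 2 * (c * (∫ t, g t ∂ν)) - ∫ t, f t * g t ∂ν = ∫ t, ((2 * c) * g t - f t * g t) ∂ν := by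
    rw [integral_sub (hg.const_mul _) hfg, integral_const_mul]
    ring
  have hI : Integrable (fun t => (starRingEnd ℂ c) * f t) ν := hf.const_mul _
  have hR : Integrable (fun t => ((starRingEnd ℂ c) * f t).re) ν := hI.re
  have h2 : ∫ t, ((starRingEnd ℂ c) * f t).re ∂ν = ‖c‖ ^ 2 := by
    have h3 : ∫ t, ((starRingEnd ℂ c) * f t).re ∂ν = (∫ t, (starRingEnd ℂ c) * f t ∂ν).re :=
      integral_re hI
    rw [h3, integral_const_mul, ← hc, Complex.sq_norm, Complex.normSq_apply]
    simp
  rw [h1]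
  calc _ ≤ ∫ t, ((1 + 2 * ‖c‖ ^ 2) - 2 * ((starRingEnd ℂ c) * f t).re) ∂ν := by
        apply norm_integral_le_of_norm_le ((integrable_const _).sub (hR.const_mul _))
        refine Filter.Eventually.of_forall fun t => ?_
        rw [← sub_mul, norm_mul, ng, mul_one]
        have e1 : ‖2 * c - f t‖ ^ 2 = 4 * ‖c‖ ^ 2 + ‖f t‖ ^ 2
            - 4 * ((starRingEnd ℂ c) * f t).re := by
          simp only [Complex.sq_norm, Complex.normSq_apply]
          simp
          ring
        rw [nf] at e1
        simp only [Pi.sub_apply]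
        nlinarith [sq_nonneg (‖2 * c - f t‖ - 1)]
    _ = 1 := by
        rw [integral_sub (integrable_const _) (hR.const_mul _), integral_const_mul, h2]
        simp

theorem zalcman_aux (x y : ℂ) (hx : ‖x‖ ≤ 1) (hy : ‖y‖ ≤ 1) (hxy : ‖2 * x - y‖ ≤ 1)
    (P B l : ℝ) (hP : 0 < P) (hB : 0 < B) :
    (0 ≤ l ∧ l ≤ 2 * B / P → ‖(l : ℂ) * P * x - B * y‖ ≤ B) ∧
    (l < 0 ∨ 2 * B / P < l → ‖(l : ℂ) * P * x - B * y‖ ≤ |l * P - B|) := by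
  have key : ∀ r s : ℝ, ‖(r : ℂ) * x + (s : ℂ) * y‖ ≤ |r| + |s| := by
    intro r s
    refine (norm_add_le _ _).trans ?_
    rw [norm_mul, norm_mul, Complex.norm_real, Complex.norm_real, Real.norm_eq_abs, Real.norm_eq_abs]
    nlinarith [abs_nonneg r, abs_nonneg s]
  have key2 : ∀ r s : ℝ, ‖(r : ℂ) * (2 * x - y) + (s : ℂ) * y‖ ≤ |r| + |s| := by
    intro r s
    refine (norm_add_le _ _).trans ?_
    rw [norm_mul, norm_mul, Complex.norm_real, Complex.norm_real, Real.norm_eq_abs, Real.norm_eq_abs]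
    nlinarith [abs_nonneg r, abs_nonneg s]
  rw [le_div_iff₀ hP, div_lt_iff₀ hP]
  refine ⟨fun ⟨h0, h1⟩ => ?_, fun h => ?_⟩
  · have := key2 (l * P / 2) (-(B - l * P / 2))
    rw [abs_neg, abs_of_nonneg (by positivity), abs_of_nonneg (by linarith)] at this
    convert this using 2
    · push_cast; ring
    · ring
  · rcases h with h | h
    · have hlP : l * P < 0 := mul_neg_of_neg_of_pos h hP
      have := key (l * P) (-B)
      rw [abs_neg, abs_of_neg hlP, abs_of_pos hB] at this
      rw [abs_of_neg (by linarith)]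
      convert this using 2
      · push_cast; ring
      · ring
    · have h4 : ‖((l * P - 2 * B : ℝ) : ℂ) * x‖ ≤ l * P - 2 * B := by
        rw [norm_mul, Complex.norm_real, Real.norm_eq_abs, abs_of_pos (by linarith)]
        nlinarith
      have h5 : ‖(B : ℂ) * (2 * x - y)‖ ≤ B := by
        rw [norm_mul, Complex.norm_real, Real.norm_eq_abs, abs_of_pos hB]
        nlinarith
      rw [abs_of_pos (by linarith)]
      have h6 : (l : ℂ) * P * x - B * y
          = ((l * P - 2 * B : ℝ) : ℂ) * x + (B : ℂ) * (2 * x - y) := by push_cast; ring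
      rw [h6]
      exact (norm_add_le _ _).trans (by linarith)

theorem generalized_zalcman_hull_starlike
    (α : ℝ) (hα : α < 1) (A : ℕ → ℝ)
    (hA : ∀ n, A n = (∏ j ∈ Finset.range (n - 1), (2 * (1 - α) + (j : ℝ))) /
      (Nat.factorial (n - 1) : ℝ))
    (ν : Measure (Set.Icc (0 : ℝ) (2 * Real.pi))) [IsProbabilityMeasure ν]
    (a : ℕ → ℂ)
    (ha : ∀ n, 2 ≤ n →
      a n = (A n : ℂ) * ∫ t, Complex.exp (Complex.I * (n - 1 : ℕ) * ((t : ℝ) : ℂ)) ∂ν)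
    (lam : ℝ) (n m : ℕ) (hn : 2 ≤ n) (hm : 2 ≤ m) :
    (0 ≤ lam ∧ lam ≤ 2 * A (n + m - 1) / (A n * A m) →
      ‖(lam : ℂ) * a n * a m - a (n + m - 1)‖ ≤ A (n + m - 1)) ∧
    (lam < 0 ∨ 2 * A (n + m - 1) / (A n * A m) < lam →
      ‖(lam : ℂ) * a n * a m - a (n + m - 1)‖ ≤ |lam * A n * A m - A (n + m - 1)|) := by
  have Apos : ∀ k, 0 < A k := by
    intro k
    rw [hA]
    refine div_pos (Finset.prod_pos fun j _ => ?_) (by positivity)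
    have : (0 : ℝ) ≤ j := by positivity
    linarith
  let e : ℕ → Set.Icc (0 : ℝ) (2 * Real.pi) → ℂ :=
    fun k t => Complex.exp (Complex.I * (k : ℕ) * ((t : ℝ) : ℂ))
  have ne : ∀ k t, ‖e k t‖ = 1 := by
    intro k t
    simp [e, Complex.norm_exp]
  have ie : ∀ k, Integrable (e k) ν := by
    intro k
    have hcont : Continuous (e k) := by fun_prop
    exact Integrable.of_bound hcont.aestronglyMeasurable 1
      (Filter.Eventually.of_forall fun t => (ne k t).le)
  have le1 : ∀ k, ‖∫ t, e k t ∂ν‖ ≤ 1 := by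
    intro k
    have := norm_integral_le_of_norm_le_const (μ := ν) (f := e k) (C := 1)
      (Filter.Eventually.of_forall fun t => (ne k t).le)
    simpa using this
  have hmul : e (n + m - 1 - 1) = fun t => e (n - 1) t * e (m - 1) t := by
    funext t
    have h : n + m - 1 - 1 = (n - 1) + (m - 1) := by omega
    simp only [e]
    rw [h, ← Complex.exp_add]
    push_cast
    ring_nf
  have h2 := zalcman_two ν (e (n - 1)) (e (m - 1)) (ie _) (ie _) (hmul ▸ ie (n + m - 1 - 1))
    (ne _) (ne _)
  have hle : ‖(∫ t, e (n - 1) t ∂ν) * (∫ t, e (m - 1) t ∂ν)‖ ≤ 1 := by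
    rw [norm_mul]
    exact mul_le_one₀ (le1 _) (norm_nonneg _) (le1 _)
  have hy := le1 (n + m - 1 - 1)
  have hyeq : ∫ t, e (n + m - 1 - 1) t ∂ν = ∫ t, e (n - 1) t * e (m - 1) t ∂ν := by rw [hmul]
  rw [← hyeq] at h2
  have main := zalcman_aux _ _ hle hy h2 (A n * A m) (A (n + m - 1)) lam
    (mul_pos (Apos n) (Apos m)) (Apos _)
  have hE : (lam : ℂ) * a n * a m - a (n + m - 1) = (lam : ℂ) * ((A n * A m : ℝ) : ℂ) *
      ((∫ t, e (n - 1) t ∂ν) * (∫ t, e (m - 1) t ∂ν))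
      - (A (n + m - 1) : ℂ) * ∫ t, e (n + m - 1 - 1) t ∂ν := by
    rw [ha n hn, ha m hm, ha (n + m - 1) (by omega)]
    simp only [e]
    push_cast
    ring
  rw [hE, mul_assoc lam]
  exact main
end

section
/- Fix a real number α < 1 and for n ≥ 2 set A_n = (1/(n−1)!)·∏_{j=0}^{n−2} (2(1−α)+j). Suppose the complex numbers (a_n)_{n≥2} satisfy a_n = (A_n/n) · ∫₀^{2π} e^{i(n−1)t} dν(t) for all n ≥ 2, for some probability measure ν on [0,2π]. Then for every real λ and all integers n, m ≥ 2: |λ a_n a_m − a_{n+m−1}| ≤ A_{n+m−1}/(n+m−1) whenever 0 ≤ λ ≤ 2nm·A_{n+m−1}/((n+m−1)·A_n A_m), and |λ a_n a_m − a_{n+m−1}| ≤ |λ·A_n A_m/(nm) − A_{n+m−1}/(n+m−1)| whenever λ < 0 or λ > 2nm·A_{n+m−1}/((n+m−1)·A_n A_m). -/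
open MeasureTheory

lemma aux_var {Ω : Type*} [MeasurableSpace Ω] (ν : Measure Ω) [IsProbabilityMeasure ν]
    (u : Ω → ℂ) (hu : Integrable u ν) (hu1 : ∀ t, ‖u t‖ = 1) :
    Integrable (fun t => ‖u t - ∫ s, u s ∂ν‖ ^ 2) ν ∧
    ∫ t, ‖u t - ∫ s, u s ∂ν‖ ^ 2 ∂ν = 1 - ‖∫ s, u s ∂ν‖ ^ 2 := by
  set x := ∫ s, u s ∂ν with hx
  have h1 : ∀ t, ‖u t - x‖ ^ 2 = 1 - 2 * (u t * (starRingEnd ℂ) x).re + ‖x‖ ^ 2 := by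
    intro t
    have h := hu1 t
    have h2 : ‖u t‖ ^ 2 = 1 := by rw [h]; norm_num
    rw [← Complex.normSq_eq_norm_sq, Complex.normSq_sub, Complex.normSq_eq_norm_sq,
      Complex.normSq_eq_norm_sq, h2]
    ring
  have hi : Integrable (fun t => u t * (starRingEnd ℂ) x) ν := hu.mul_const _
  have hir : Integrable (fun t => (u t * (starRingEnd ℂ) x).re) ν := hi.re
  have e : ∫ t, (u t * (starRingEnd ℂ) x).re ∂ν = ‖x‖ ^ 2 := by
    have := integral_re hi
    have h3 : ∫ t, (u t * (starRingEnd ℂ) x).re ∂ν = (∫ t, u t * (starRingEnd ℂ) x ∂ν).re := this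
    rw [h3, integral_mul_const, ← hx, Complex.mul_conj, Complex.ofReal_re,
      Complex.normSq_eq_norm_sq]
  simp_rw [h1]
  have i1 : Integrable (fun t => 1 - 2 * (u t * (starRingEnd ℂ) x).re) ν :=
    (integrable_const _).sub (hir.const_mul 2)
  refine ⟨i1.add (integrable_const _), ?_⟩
  rw [integral_add i1 (integrable_const _), integral_sub (integrable_const _) (hir.const_mul 2),
    integral_const_mul, e]
  simp
  ring

lemma aux_cov {Ω : Type*} [MeasurableSpace Ω] (ν : Measure Ω) [IsProbabilityMeasure ν]
    (u v : Ω → ℂ) (hu : Integrable u ν) (hv : Integrable v ν)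
    (huv : Integrable (fun t => u t * v t) ν)
    (hu1 : ∀ t, ‖u t‖ = 1) (hv1 : ∀ t, ‖v t‖ = 1) :
    ‖(∫ t, u t ∂ν) * (∫ t, v t ∂ν)‖ +
      ‖(∫ t, u t * v t ∂ν) - (∫ t, u t ∂ν) * (∫ t, v t ∂ν)‖ ≤ 1 := by
  obtain ⟨iu, eu⟩ := aux_var ν u hu hu1
  obtain ⟨iv, ev⟩ := aux_var ν v hv hv1
  set x := ∫ s, u s ∂ν with hx
  set y := ∫ s, v s ∂ν with hy
  have e : (∫ t, u t * v t ∂ν) - x * y = ∫ t, (u t - x) * (v t - y) ∂ν := by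
    have : ∀ t, (u t - x) * (v t - y) = u t * v t - u t * y - x * v t + x * y := by
      intro t; ring
    simp_rw [this]
    have i1 : Integrable (fun t => u t * v t - u t * y) ν := huv.sub (hu.mul_const y)
    have i2 : Integrable (fun t => u t * v t - u t * y - x * v t) ν :=
      i1.sub (hv.const_mul x)
    rw [integral_add i2 (integrable_const _), integral_sub i1 (hv.const_mul x),
      integral_sub huv (hu.mul_const y), integral_mul_const, integral_const_mul, ← hx, ← hy]
    simp
  have hb : ‖∫ t, (u t - x) * (v t - y) ∂ν‖ ≤
      ∫ t, (1 / 2 : ℝ) * (‖u t - x‖ ^ 2 + ‖v t - y‖ ^ 2) ∂ν := by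
    apply norm_integral_le_of_norm_le ((iu.add iv).const_mul _)
    refine Filter.Eventually.of_forall fun t => ?_
    simp only [norm_mul, Pi.add_apply]
    nlinarith [sq_nonneg (‖u t - x‖ - ‖v t - y‖)]
  rw [integral_const_mul, integral_add iu iv, eu, ev] at hb
  rw [e, norm_mul]
  nlinarith [sq_nonneg (‖x‖ - ‖y‖)]

lemma aux_main (p q : ℝ) (hq : 0 ≤ q) (w z : ℂ) (h : ‖w‖ + ‖z - w‖ ≤ 1) :
    ‖(p : ℂ) * w - q * z‖ ≤ max q |p - q| := by
  have e : (p : ℂ) * w - q * z = ((p - q : ℝ) : ℂ) * w - (q : ℂ) * (z - w) := by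
    push_cast; ring
  rw [e]
  refine (norm_sub_le _ _).trans ?_
  rw [norm_mul, norm_mul, Complex.norm_real, Complex.norm_real, Real.norm_eq_abs,
    Real.norm_eq_abs, abs_of_nonneg hq]
  have h1 := mul_le_mul_of_nonneg_right (le_max_right q |p - q|) (norm_nonneg w)
  have h2 := mul_le_mul_of_nonneg_right (le_max_left q |p - q|) (norm_nonneg (z - w))
  have h3 := mul_le_mul_of_nonneg_left h (hq.trans (le_max_left q |p - q|))
  linarith


theorem generalized_zalcman_hull_convex
    (α : ℝ) (hα : α < 1) (A : ℕ → ℝ)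
    (hA : ∀ n, A n = (∏ j ∈ Finset.range (n - 1), (2 * (1 - α) + (j : ℝ))) /
      (Nat.factorial (n - 1) : ℝ))
    (ν : Measure (Set.Icc (0 : ℝ) (2 * Real.pi))) [IsProbabilityMeasure ν]
    (a : ℕ → ℂ)
    (ha : ∀ n, 2 ≤ n →
      a n = ((A n : ℂ) / (n : ℂ)) *
        ∫ t, Complex.exp (Complex.I * (n - 1 : ℕ) * ((t : ℝ) : ℂ)) ∂ν)
    (lam : ℝ) (n m : ℕ) (hn : 2 ≤ n) (hm : 2 ≤ m) :
    (0 ≤ lam ∧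
        lam ≤ 2 * n * m * A (n + m - 1) / (((n : ℝ) + m - 1) * (A n * A m)) →
      ‖(lam : ℂ) * a n * a m - a (n + m - 1)‖ ≤ A (n + m - 1) / ((n : ℝ) + m - 1)) ∧
    (lam < 0 ∨ 2 * n * m * A (n + m - 1) / (((n : ℝ) + m - 1) * (A n * A m)) < lam →
      ‖(lam : ℂ) * a n * a m - a (n + m - 1)‖ ≤
        |lam * (A n * A m) / ((n : ℝ) * m) - A (n + m - 1) / ((n : ℝ) + m - 1)|) := by
  have hApos : ∀ k, 0 < A k := by
    intro k
    rw [hA]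
    apply div_pos
    · apply Finset.prod_pos
      intro j _
      have : (0 : ℝ) ≤ j := Nat.cast_nonneg j
      linarith
    · exact_mod_cast Nat.factorial_pos _
  have hnR : (2 : ℝ) ≤ n := by exact_mod_cast hn
  have hmR : (2 : ℝ) ≤ m := by exact_mod_cast hm
  have hN : ((n + m - 1 : ℕ) : ℝ) = (n : ℝ) + m - 1 := by
    rw [Nat.cast_sub (by omega)]; push_cast; ring
  have hNpos : (0 : ℝ) < (n : ℝ) + m - 1 := by linarith
  set E : ℕ → Set.Icc (0 : ℝ) (2 * Real.pi) → ℂ :=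
    fun k t => Complex.exp (Complex.I * (k : ℂ) * ((t : ℝ) : ℂ)) with hE
  have hE1 : ∀ k t, ‖E k t‖ = 1 := by
    intro k t
    have : Complex.I * (k : ℂ) * ((t : ℝ) : ℂ) = (((k : ℝ) * (t : ℝ) : ℝ) : ℂ) * Complex.I := by
      push_cast; ring
    simp only [hE]
    rw [this, Complex.norm_exp_ofReal_mul_I]
  have hEi : ∀ k, Integrable (E k) ν := by
    intro k
    have hc : Continuous (E k) := by simp only [hE]; fun_prop
    refine Integrable.of_bound hc.aestronglyMeasurable 1 ?_
    exact Filter.Eventually.of_forall fun t => (hE1 k t).le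
  have hmul : ∀ t, E (n + m - 1 - 1) t = E (n - 1) t * E (m - 1) t := by
    intro t
    simp only [hE]
    rw [← Complex.exp_add, show n + m - 1 - 1 = (n - 1) + (m - 1) by omega]
    congr 1
    push_cast
    ring
  have hcov := aux_cov ν (E (n - 1)) (E (m - 1)) (hEi _) (hEi _)
    ((hEi (n + m - 1 - 1)).congr (Filter.Eventually.of_forall hmul)) (hE1 _) (hE1 _)
  have hz : ∫ t, E (n + m - 1 - 1) t ∂ν = ∫ t, E (n - 1) t * E (m - 1) t ∂ν := by
    simp_rw [hmul]
  have han : a n = ((A n : ℂ) / (n : ℂ)) * ∫ t, E (n - 1) t ∂ν := ha n hn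
  have ham : a m = ((A m : ℂ) / (m : ℂ)) * ∫ t, E (m - 1) t ∂ν := ha m hm
  have haN : a (n + m - 1) = ((A (n + m - 1) : ℂ) / ((n + m - 1 : ℕ) : ℂ)) *
      ∫ t, E (n + m - 1 - 1) t ∂ν := ha (n + m - 1) (by omega)
  rw [hz] at haN
  have hNC : ((n + m - 1 : ℕ) : ℂ) = (((n : ℝ) + m - 1 : ℝ) : ℂ) := by
    rw [← hN]; push_cast; rfl
  set x := ∫ t, E (n - 1) t ∂ν
  set y := ∫ t, E (m - 1) t ∂ν
  set z := ∫ t, E (n - 1) t * E (m - 1) t ∂ν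
  have hq : 0 < A (n + m - 1) / ((n : ℝ) + m - 1) := div_pos (hApos _) hNpos
  have key := aux_main (lam * (A n * A m) / ((n : ℝ) * m)) (A (n + m - 1) / ((n : ℝ) + m - 1))
    hq.le (x * y) z hcov
  have heq : (lam : ℂ) * a n * a m - a (n + m - 1) =
      ((lam * (A n * A m) / ((n : ℝ) * m) : ℝ) : ℂ) * (x * y) -
        ((A (n + m - 1) / ((n : ℝ) + m - 1) : ℝ) : ℂ) * z := by
    rw [han, ham, haN, hNC, Complex.ofReal_div (A (n + m - 1))]
    push_cast
    ring
  rw [← heq] at key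
  have hAA : 0 < A n * A m := mul_pos (hApos _) (hApos _)
  have hnm : (0 : ℝ) < (n : ℝ) * m := by positivity
  have hc : 0 < A n * A m / ((n : ℝ) * m) := div_pos hAA hnm
  have hp : lam * (A n * A m) / ((n : ℝ) * m) = lam * (A n * A m / ((n : ℝ) * m)) := by ring
  have hL : 2 * n * m * A (n + m - 1) / (((n : ℝ) + m - 1) * (A n * A m)) *
      (A n * A m / ((n : ℝ) * m)) = 2 * (A (n + m - 1) / ((n : ℝ) + m - 1)) := by
    have := (hApos n).ne'
    have := (hApos m).ne'
    have := hNpos.ne'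
    field_simp
  constructor
  · rintro ⟨h0, h1⟩
    refine key.trans (max_le le_rfl ?_)
    have h2 := mul_le_mul_of_nonneg_right h1 hc.le
    have h3 := mul_nonneg h0 hc.le
    rw [hL] at h2
    rw [hp, abs_le]
    constructor <;> linarith
  · intro h
    refine key.trans (max_le ?_ le_rfl)
    rw [hp, le_abs]
    rcases h with h | h
    · right
      have := mul_neg_of_neg_of_pos h hc
      linarith
    · left
      have := mul_lt_mul_of_pos_right h hc
      rw [hL] at this
      linarith
end

section
/- Fix a real number β < 1, and let f(z) = z + Σ_{n≥2} a_n zⁿ be analytic on the open unit disc 𝔻 = {z ∈ ℂ : |z| < 1} with Re f′(z) > β for all z ∈ 𝔻. Then for every real λ and all integers n, m ≥ 2: |λ a_n a_m − a_{n+m−1}| ≤ 2(1−β)/(n+m−1) whenever 0 ≤ λ ≤ nm/((1−β)(n+m−1)), and |λ a_n a_m − a_{n+m−1}| ≤ |4λ(1−β)²/(nm) − 2(1−β)/(n+m−1)| whenever λ < 0 or λ > nm/((1−β)(n+m−1)). -/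
open MeasureTheory AddCircle ComplexConjugate

lemma zal_congr {u v : ℕ → ℂ} {s : ℂ} (hv : HasSum v s) (h : ∀ k, u k = v k) : HasSum u s := by
  rw [funext h]; exact hv

lemma zal_deriv (f : ℂ → ℂ) (a : ℕ → ℂ)
    (hf : ∀ z ∈ Metric.ball (0 : ℂ) 1, HasSum (fun k => a k * z ^ k) (f z))
    (z : ℂ) (hz : z ∈ Metric.ball (0 : ℂ) 1) :
    HasSum (fun k : ℕ => ((k : ℂ) + 1) * a (k + 1) * z ^ k) (deriv f z) := by
  have hsum : ∀ r : NNReal, r < 1 → Summable (fun k => ‖a k‖ * (r : ℝ) ^ k) := by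
    intro r hr
    have := (hf ((r : ℝ) : ℂ) (by simpa using hr)).summable.norm
    simpa using this
  have hp : HasFPowerSeriesOnBall f (FormalMultilinearSeries.ofScalars ℂ a) 0 1 := by
    refine ⟨?_, by simp, ?_⟩
    · refine ENNReal.le_of_forall_nnreal_lt fun r hr => ?_
      apply FormalMultilinearSeries.le_radius_of_summable_norm
      have := hsum r (by exact_mod_cast hr)
      simpa [FormalMultilinearSeries.ofScalars_norm] using this
    · intro y hy
      have hy' : y ∈ Metric.ball (0 : ℂ) 1 := by
        simpa [Metric.mem_eball, edist_zero_right, enorm_eq_nnnorm, ← NNReal.coe_lt_coe] using hy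
      have := hf y hy'
      simpa [FormalMultilinearSeries.ofScalars_apply_eq, mul_comm] using this
  have hd : DifferentiableOn ℂ f (Metric.ball 0 1) := by
    have := hp.differentiableOn
    rwa [show (1 : ENNReal) = ((1 : NNReal) : ENNReal) by simp, Metric.eball_coe] at this
  have hd' : DifferentiableOn ℂ (deriv f) (Metric.ball 0 1) := hd.deriv Metric.isOpen_ball
  have hT := Complex.hasSum_taylorSeries_on_ball hd' hz
  have h1 := hp.hasFPowerSeriesAt
  have h2 := hp.analyticAt.hasFPowerSeriesAt
  have h3 := h1.eq_formalMultilinearSeries h2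
  have h4 : ∀ k, a k = iteratedDeriv k f 0 / k.factorial := by
    intro k
    have := congrArg (fun q => FormalMultilinearSeries.coeff q k) h3
    simpa using this
  refine zal_congr hT fun k => ?_
  rw [h4, iteratedDeriv_succ']
  have : (k.factorial : ℂ) ≠ 0 := by exact_mod_cast k.factorial_ne_zero
  have : ((k : ℂ) + 1) ≠ 0 := by exact_mod_cast k.succ_ne_zero
  rw [Nat.factorial_succ]
  push_cast
  simp only [sub_zero, smul_eq_mul]
  field_simp

abbrev zX := AddCircle (1 : ℝ)

lemma zal_int {E : Type*} [NormedAddCommGroup E] {g : zX → E} (hg : Continuous g) :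
    Integrable g haarAddCircle :=
  hg.integrable_of_hasCompactSupport (HasCompactSupport.of_compactSpace g)

lemma zal_norm (n : ℤ) (x : zX) : ‖fourier n x‖ = 1 := by
  rw [fourier_apply]; exact Circle.norm_coe _

lemma zal_int_fourier (n : ℤ) :
    ∫ x : zX, fourier n x ∂haarAddCircle = if n = 0 then 1 else 0 := by
  have := congrFun (fourierCoeff_fourier (T := 1) n) 0
  simp only [fourierCoeff, neg_zero, fourier_zero, one_smul] at this
  rw [this]
  simp [Pi.single_apply, eq_comm]

lemma zal_mom (h : zX → ℝ) (hc : Continuous h) (h0 : ∀ x, 0 ≤ h x)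
    (h1 : ∫ x, h x ∂haarAddCircle = 1) (u v : zX → ℂ) (hu : Continuous u) (hv : Continuous v)
    (hu1 : ∀ x, ‖u x‖ = 1) (hv1 : ∀ x, ‖v x‖ = 1) :
    ‖(∫ x, (h x : ℂ) * (u x * v x) ∂haarAddCircle) - 2 * (∫ x, (h x : ℂ) * u x ∂haarAddCircle) *
      (∫ x, (h x : ℂ) * v x ∂haarAddCircle)‖ ≤ 1 := by
  set B := ∫ x, (h x : ℂ) * v x ∂haarAddCircle with hB
  have e1 : (∫ x, (h x : ℂ) * (u x * v x) ∂haarAddCircle) -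
      2 * (∫ x, (h x : ℂ) * u x ∂haarAddCircle) * B
      = ∫ x, (h x : ℂ) * u x * (v x - 2 * B) ∂haarAddCircle := by
    rw [mul_comm (2 : ℂ), mul_assoc, ← integral_mul_const, ← integral_sub]
    · congr 1; ext x; ring
    · exact zal_int (by fun_prop)
    · exact zal_int (by fun_prop)
  rw [e1]
  have e2 : ∫ x, h x * (1 + 2 * ‖B‖ ^ 2) - 2 * ((h x : ℂ) * v x * conj B).re ∂haarAddCircle = 1 := by
    rw [integral_sub (zal_int (by fun_prop)) (zal_int (by fun_prop)), integral_mul_const, h1,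
      integral_const_mul]
    have : ∫ x, ((h x : ℂ) * v x * conj B).re ∂haarAddCircle = ‖B‖ ^ 2 := by
      have h3 := integral_re (𝕜 := ℂ) (μ := haarAddCircle)
        (f := fun x : zX => (h x : ℂ) * v x * conj B) (zal_int (by fun_prop))
      simp only [RCLike.re_to_complex] at h3
      rw [h3, integral_mul_const, ← hB, Complex.mul_conj, Complex.ofReal_re, Complex.normSq_eq_norm_sq]
    rw [this]; ring
  refine le_trans ?_ e2.le
  refine norm_integral_le_of_norm_le (zal_int (by fun_prop)) (Filter.Eventually.of_forall fun x => ?_)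
  have e3 : ‖v x - 2 * B‖ ^ 2 = 1 - 4 * (v x * conj B).re + 4 * ‖B‖ ^ 2 := by
    have hv2 : ‖v x‖ ^ 2 = 1 := by rw [hv1]; norm_num
    rw [← Complex.normSq_eq_norm_sq, Complex.normSq_apply] at *
    rw [← Complex.normSq_eq_norm_sq, Complex.normSq_apply]
    simp at *
    nlinarith
  have e4 : ((h x : ℂ) * v x * conj B).re = h x * (v x * conj B).re := by
    rw [mul_assoc, Complex.re_ofReal_mul]
  rw [norm_mul, norm_mul, hu1, Complex.norm_real, Real.norm_of_nonneg (h0 x), e4, mul_one]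
  have : ‖v x - 2 * B‖ ≤ 1 + 2 * ‖B‖ ^ 2 - 2 * (v x * conj B).re := by
    nlinarith [sq_nonneg (‖v x - 2 * B‖ - 1)]
  nlinarith [mul_le_mul_of_nonneg_left this (h0 x)]

lemma zal_mom1 (h : zX → ℝ) (hc : Continuous h) (h0 : ∀ x, 0 ≤ h x)
    (h1 : ∫ x, h x ∂haarAddCircle = 1) (u : zX → ℂ)
    (hu1 : ∀ x, ‖u x‖ = 1) :
    ‖∫ x, (h x : ℂ) * u x ∂haarAddCircle‖ ≤ 1 := by
  refine le_trans ?_ h1.le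
  refine norm_integral_le_of_norm_le (zal_int hc) (Filter.Eventually.of_forall fun x => ?_)
  rw [norm_mul, hu1, Complex.norm_real, Real.norm_of_nonneg (h0 x), mul_one]

lemma zal_coeff (b : ℕ → ℂ) (r : ℝ) (hr0 : 0 ≤ r) (P : zX → ℂ)
    (hs : Summable fun k => ‖b k‖ * r ^ k)
    (hP : ∀ x, HasSum (fun k : ℕ => b k * r ^ k * fourier (k : ℤ) x) (P x)) (j : ℤ) :
    HasSum (fun k : ℕ => if (k : ℤ) + j = 0 then b k * r ^ k else 0)
      (∫ x, P x * fourier j x ∂haarAddCircle) := by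
  have key := hasSum_integral_of_summable_integral_norm (μ := (haarAddCircle : Measure zX))
    (F := fun (k : ℕ) x => b k * r ^ k * fourier (k : ℤ) x * fourier j x)
    (fun k => zal_int (by fun_prop))
    (by simpa [-fourier_apply, zal_norm, abs_of_nonneg hr0] using hs)
  have e : ∀ x, ∑' k : ℕ, b k * r ^ k * fourier (k : ℤ) x * fourier j x = P x * fourier j x :=
    fun x => ((hP x).mul_right _).tsum_eq
  simp only [e] at key
  refine zal_congr key fun k => ?_
  simp only [mul_assoc, ← fourier_add, integral_const_mul, zal_int_fourier]
  split_ifs <;> simp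

lemma zal_r (b : ℕ → ℂ) (p : ℂ → ℂ) (hb : b 0 = 1)
    (hp : ∀ z ∈ Metric.ball (0 : ℂ) 1, HasSum (fun k => b k * z ^ k) (p z))
    (hre : ∀ z ∈ Metric.ball (0 : ℂ) 1, 0 < (p z).re) (r : ℝ) (hr0 : 0 ≤ r) (hr1 : r < 1)
    (i j : ℕ) (hi : 1 ≤ i) (hj : 1 ≤ j) :
    r ^ i * ‖b i‖ ≤ 2 ∧ r ^ (i + j) * ‖b i * b j - b (i + j)‖ ≤ 2 := by
  have hs : Summable fun k => ‖b k‖ * r ^ k := by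
    have := (hp (r : ℂ) (by simpa [abs_of_nonneg hr0] using hr1)).summable.norm
    simpa [abs_of_nonneg hr0] using this
  have hmem : ∀ x : zX, (r : ℂ) * fourier 1 x ∈ Metric.ball (0 : ℂ) 1 := by
    intro x
    rw [mem_ball_zero_iff, norm_mul, zal_norm, mul_one, Complex.norm_real, Real.norm_of_nonneg hr0]
    exact hr1
  set P : zX → ℂ := fun x => p (r * fourier 1 x) with hPdef
  have hpow : ∀ (k : ℕ) (x : zX), (fourier 1 x : ℂ) ^ k = fourier (k : ℤ) x := by
    intro k x
    induction k with
    | zero => simp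
    | succ k ih => rw [pow_succ, ih, ← fourier_add]; push_cast; rfl
  have hP : ∀ x, HasSum (fun k : ℕ => b k * r ^ k * fourier (k : ℤ) x) (P x) := by
    intro x
    have := hp _ (hmem x)
    simpa only [mul_pow, hpow, mul_assoc] using this
  have hPc : Continuous P := by
    have : P = fun x => ∑' k : ℕ, b k * r ^ k * fourier (k : ℤ) x := by
      ext x; exact (hP x).tsum_eq.symm
    rw [this]
    refine continuous_tsum (fun k => by fun_prop) hs fun k x => ?_
    simp [-fourier_apply, zal_norm, abs_of_nonneg hr0]
  have hco := zal_coeff b r hr0 P hs hP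
  have hneg : ∀ k : ℕ, ∫ x, P x * fourier (-(k : ℤ)) x ∂haarAddCircle = b k * r ^ k := by
    intro k
    refine (hco (-(k : ℤ))).unique ?_
    convert hasSum_ite_eq k (b k * (r : ℂ) ^ k) using 2 with l
    by_cases hl : l = k
    · simp [hl]
    · have : ¬ ((l : ℤ) + -(k : ℤ) = 0) := by omega
      simp [hl, this]
  have hpos : ∀ k : ℕ, 1 ≤ k → ∫ x, P x * fourier (k : ℤ) x ∂haarAddCircle = 0 := by
    intro k hk
    refine (hco (k : ℤ)).unique ?_
    convert hasSum_zero using 2 with l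
    have : ¬ ((l : ℤ) + (k : ℤ) = 0) := by omega
    simp [this]
  have hcc : Continuous fun x => (P x).re := by fun_prop
  have hI : ∫ x, (P x).re ∂haarAddCircle = 1 := by
    have h3 := integral_re (𝕜 := ℂ) (μ := haarAddCircle) (f := P) (zal_int hPc)
    simp only [RCLike.re_to_complex] at h3
    have h4 := hneg 0
    simp [hb] at h4
    rw [h3, h4]; simp
  have hm : ∀ k : ℕ, 1 ≤ k →
      ∫ x, ((P x).re : ℂ) * fourier (-(k : ℤ)) x ∂haarAddCircle = b k * r ^ k / 2 := by
    intro k hk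
    have e1 : ∀ x, ((P x).re : ℂ) * fourier (-(k : ℤ)) x
        = (P x * fourier (-(k : ℤ)) x + conj (P x * fourier (k : ℤ) x)) / 2 := by
      intro x
      rw [map_mul, ← fourier_neg, Complex.re_eq_add_conj]; ring
    have hcf : Continuous fun x => P x * fourier (k : ℤ) x := by fun_prop
    simp only [e1]
    rw [integral_div, integral_add (f := fun x => P x * fourier (-(k : ℤ)) x)
      (g := fun x => conj (P x * fourier (k : ℤ) x)) (zal_int (by fun_prop))
      (zal_int (Complex.continuous_conj.comp hcf)), integral_conj, hneg, hpos k hk]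
    simp
  have h0 : ∀ x, 0 ≤ (P x).re := fun x => (hre _ (hmem x)).le
  constructor
  · have := zal_mom1 _ hcc h0 hI (fun x => fourier (-(i : ℤ)) x) (fun x => zal_norm _ x)
    rw [hm i hi] at this
    simp [abs_of_nonneg hr0] at this
    linarith
  · have := zal_mom _ hcc h0 hI (fun x => fourier (-(i : ℤ)) x) (fun x => fourier (-(j : ℤ)) x)
      (by fun_prop) (by fun_prop) (fun x => zal_norm _ x) (fun x => zal_norm _ x)
    have e2 : ∀ x : zX, (fourier (-(i : ℤ)) x : ℂ) * fourier (-(j : ℤ)) x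
        = fourier (-((i + j : ℕ) : ℤ)) x := by
      intro x; rw [← fourier_add]; congr 1; push_cast; ring_nf
    simp only [e2] at this
    rw [hm i hi, hm j hj, hm (i + j) (by omega)] at this
    have e3 : b (i + j) * (r : ℂ) ^ (i + j) / 2 - 2 * (b i * r ^ i / 2) * (b j * r ^ j / 2)
        = -((r : ℂ) ^ (i + j) * (b i * b j - b (i + j)) / 2) := by ring
    rw [e3, norm_neg, norm_div, norm_mul, norm_pow, Complex.norm_real, Real.norm_of_nonneg hr0] at this
    simp at this
    linarith

lemma zal_lim (N : ℕ) (y : ℝ) (h : ∀ r : ℝ, 0 ≤ r → r < 1 → r ^ N * y ≤ 2) : y ≤ 2 := by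
  have ht : Filter.Tendsto (fun r : ℝ => r ^ N * y) (nhdsWithin 1 (Set.Iio 1)) (nhds (1 ^ N * y)) :=
    (Continuous.tendsto (by fun_prop) 1).mono_left nhdsWithin_le_nhds
  rw [one_pow, one_mul] at ht
  refine le_of_tendsto ht ?_
  filter_upwards [Ioo_mem_nhdsLT (zero_lt_one' ℝ)] with r hr
  exact h r hr.1.le hr.2

theorem generalized_zalcman_Rbeta
    (β : ℝ) (hβ : β < 1) (f : ℂ → ℂ) (a : ℕ → ℂ)
    (ha0 : a 0 = 0) (ha1 : a 1 = 1)
    (hf : ∀ z ∈ Metric.ball (0 : ℂ) 1, HasSum (fun k => a k * z ^ k) (f z))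
    (hre : ∀ z ∈ Metric.ball (0 : ℂ) 1, β < (deriv f z).re)
    (lam : ℝ) (n m : ℕ) (hn : 2 ≤ n) (hm : 2 ≤ m) :
    (0 ≤ lam ∧ lam ≤ (n : ℝ) * m / ((1 - β) * ((n : ℝ) + m - 1)) →
      ‖(lam : ℂ) * a n * a m - a (n + m - 1)‖ ≤ 2 * (1 - β) / ((n : ℝ) + m - 1)) ∧
    (lam < 0 ∨ (n : ℝ) * m / ((1 - β) * ((n : ℝ) + m - 1)) < lam →
      ‖(lam : ℂ) * a n * a m - a (n + m - 1)‖ ≤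
        |4 * lam * (1 - β) ^ 2 / ((n : ℝ) * m) - 2 * (1 - β) / ((n : ℝ) + m - 1)|) := by
  obtain ⟨i, rfl⟩ : ∃ i, n = i + 1 := ⟨n - 1, by omega⟩
  obtain ⟨j, rfl⟩ : ∃ j, m = j + 1 := ⟨m - 1, by omega⟩
  have hγ : 0 < 1 - β := by linarith
  have hγc : (1 - (β : ℂ)) ≠ 0 := by exact_mod_cast hγ.ne'
  set b : ℕ → ℂ := fun k => (((k : ℂ) + 1) * a (k + 1) - if k = 0 then (β : ℂ) else 0) / (1 - β)
    with hbdef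
  have hb0 : b 0 = 1 := by simp [hbdef, ha1, hγc]
  have hb : ∀ k, 1 ≤ k → a (k + 1) = (1 - β) / ((k : ℂ) + 1) * b k := by
    intro k hk
    have : ((k : ℂ) + 1) ≠ 0 := by exact_mod_cast k.succ_ne_zero
    have hk0 : k ≠ 0 := by omega
    simp only [hbdef, hk0, if_false, sub_zero]
    field_simp
  have hp : ∀ z ∈ Metric.ball (0 : ℂ) 1,
      HasSum (fun k => b k * z ^ k) ((deriv f z - β) / (1 - β)) := by
    intro z hz
    have h1 := zal_deriv f a hf z hz
    have h2 := (h1.sub (hasSum_ite_eq 0 (β : ℂ))).div_const (1 - (β : ℂ))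
    refine zal_congr h2 fun k => ?_
    by_cases hk : k = 0
    · simp [hbdef, hk]
    · simp [hbdef, hk]; ring
  have hpre : ∀ z ∈ Metric.ball (0 : ℂ) 1, 0 < ((deriv f z - β) / (1 - (β : ℂ))).re := by
    intro z hz
    have := hre z hz
    have e : (1 - (β : ℂ)) = ((1 - β : ℝ) : ℂ) := by push_cast; rfl
    rw [e, Complex.div_ofReal_re]
    apply div_pos _ hγ
    simp; linarith
  have hb2 : ∀ k, 1 ≤ k → ‖b k‖ ≤ 2 := fun k hk => zal_lim k _ fun r hr0 hr1 =>
    (zal_r b _ hb0 hp hpre r hr0 hr1 k k hk hk).1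
  have hi : 1 ≤ i := by omega
  have hj : 1 ≤ j := by omega
  have hb3 : ‖b i * b j - b (i + j)‖ ≤ 2 := zal_lim (i + j) _ fun r hr0 hr1 =>
    (zal_r b _ hb0 hp hpre r hr0 hr1 i j hi hj).2
  have hb4 : ‖b i * b j‖ ≤ 4 := by
    rw [norm_mul]
    nlinarith [hb2 i hi, hb2 j hj, norm_nonneg (b i), norm_nonneg (b j)]
  have hb5 := hb2 (i + j) (by omega)
  have eidx : i + 1 + (j + 1) - 1 = (i + j) + 1 := by omega
  rw [eidx, hb i hi, hb j hj, hb (i + j) (by omega)]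
  push_cast
  have hI : (0 : ℝ) < i + 1 := by positivity
  have hJ : (0 : ℝ) < j + 1 := by positivity
  have hS : (0 : ℝ) < i + j + 1 := by positivity
  have eS : (i : ℝ) + 1 + (j + 1) - 1 = i + j + 1 := by ring
  rw [eS]
  set t : ℝ := lam * (1 - β) * (i + j + 1) / ((i + 1) * (j + 1)) with ht
  set K : ℝ := (1 - β) / (i + j + 1) with hK
  have hKpos : 0 < K := by positivity
  have hN : ‖(lam : ℂ) * ((1 - β) / ((i : ℂ) + 1) * b i) * ((1 - β) / ((j : ℂ) + 1) * b j)
      - (1 - β) / ((i : ℂ) + j + 1) * b (i + j)‖ = K * ‖(t : ℂ) * (b i * b j) - b (i + j)‖ := by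
    have hIc : ((i : ℂ) + 1) ≠ 0 := by exact_mod_cast hI.ne'
    have hJc : ((j : ℂ) + 1) ≠ 0 := by exact_mod_cast hJ.ne'
    have hSc : ((i : ℂ) + j + 1) ≠ 0 := by exact_mod_cast hS.ne'
    have : (K : ℂ) * ((t : ℂ) * (b i * b j) - b (i + j)) =
      (lam : ℂ) * ((1 - β) / ((i : ℂ) + 1) * b i) * ((1 - β) / ((j : ℂ) + 1) * b j)
      - (1 - β) / ((i : ℂ) + j + 1) * b (i + j) := by
      rw [hK, ht]; push_cast; field_simp
    rw [← this, norm_mul, Complex.norm_real, Real.norm_of_nonneg hKpos.le]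
  rw [hN]
  have eR1 : 2 * (1 - β) / ((i : ℝ) + j + 1) = K * 2 := by rw [hK]; ring
  have eR2 : |4 * lam * (1 - β) ^ 2 / (((i : ℝ) + 1) * (j + 1)) - K * 2|
      = K * |4 * t - 2| := by
    rw [← abs_of_pos hKpos, ← abs_mul, abs_of_pos hKpos]
    congr 1
    rw [hK, ht]; field_simp
  rw [eR1, eR2]
  have htl : t = lam / (((i : ℝ) + 1) * (j + 1) / ((1 - β) * (i + j + 1))) := by
    rw [ht]; field_simp
  have hQ : 0 < ((i : ℝ) + 1) * (j + 1) / ((1 - β) * (i + j + 1)) := by positivity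
  refine ⟨fun ⟨h0, h1⟩ => ?_, fun h => ?_⟩
  · have t0 : 0 ≤ t := by rw [htl]; positivity
    have t1 : t ≤ 1 := by rw [htl, div_le_one hQ]; exact h1
    refine mul_le_mul_of_nonneg_left ?_ hKpos.le
    have e : (t : ℂ) * (b i * b j) - b (i + j)
        = (t : ℂ) * (b i * b j - b (i + j)) - ((1 - t : ℝ) : ℂ) * b (i + j) := by push_cast; ring
    rw [e]
    refine (norm_sub_le _ _).trans ?_
    rw [norm_mul, norm_mul, Complex.norm_real, Complex.norm_real, Real.norm_of_nonneg t0,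
      Real.norm_of_nonneg (by linarith)]
    nlinarith
  · refine mul_le_mul_of_nonneg_left ?_ hKpos.le
    rcases h with h | h
    · have t0 : t < 0 := by rw [htl]; exact div_neg_of_neg_of_pos h hQ
      refine (norm_sub_le _ _).trans ?_
      rw [norm_mul (t : ℂ), Complex.norm_real, Real.norm_of_nonpos t0.le,
        abs_of_neg (by linarith)]
      nlinarith
    · have t1 : 1 < t := by rw [htl, one_lt_div hQ]; exact h
      have e : (t : ℂ) * (b i * b j) - b (i + j)
        = ((t - 1 : ℝ) : ℂ) * (b i * b j) + (b i * b j - b (i + j)) := by push_cast; ring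
      rw [e]
      refine (norm_add_le _ _).trans ?_
      rw [norm_mul ((t - 1 : ℝ) : ℂ), Complex.norm_real, Real.norm_of_nonneg (by linarith),
        abs_of_pos (by linarith)]
      nlinarith
end

section
/- Fix a real number β < 1, and let f(z) = z + Σ_{n≥2} a_n zⁿ be analytic on the open unit disc 𝔻 with Re(f(z)/z) > β for all z ∈ 𝔻 \ {0}. Then for every real λ and all integers n, m ≥ 2: |λ a_n a_m − a_{n+m−1}| ≤ 2(1−β) whenever 0 ≤ λ ≤ 1/(1−β), and |λ a_n a_m − a_{n+m−1}| ≤ 2(1−β)·|2λ(1−β) − 1| whenever λ < 0 or λ > 1/(1−β). -/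
lemma HasSum.congr_aux {u v : ℕ → ℂ} {x : ℂ} (h : HasSum u x) (e : ∀ k, v k = u k) :
    HasSum v x := by
  rwa [funext e]

open MeasureTheory Filter Topology in
lemma exp_int (j : ℤ) : ∫ θ in (0:ℝ)..(2*Real.pi), Complex.exp (j * θ * Complex.I) =
    if j = 0 then (2*Real.pi : ℂ) else 0 := by
  split_ifs with h
  · simp [h]
  · have hc : (j * Complex.I : ℂ) ≠ 0 := by simp [h]
    have : ∀ θ : ℝ, Complex.exp (j * θ * Complex.I) = Complex.exp ((j * Complex.I) * θ) := by
      intro θ; congr 1; ring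
    simp_rw [this]
    rw [integral_exp_mul_complex hc]
    have h2 : (j * Complex.I * ((2*Real.pi : ℝ) : ℂ)) = j * (2 * Real.pi * Complex.I) := by
      push_cast; ring
    rw [h2, Complex.exp_int_mul_two_pi_mul_I]
    simp

lemma fourier_sum (b : ℕ → ℂ) (hb : Summable (fun k => ‖b k‖)) (P : ℝ → ℂ)
    (hP : ∀ θ : ℝ, HasSum (fun k : ℕ => b k * Complex.exp (k * θ * Complex.I)) (P θ)) (j : ℤ) :
    HasSum (fun k : ℕ => if (k : ℤ) = j then 2 * Real.pi * b k else 0)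
      (∫ θ in (0:ℝ)..(2*Real.pi), P θ * Complex.exp (-j * θ * Complex.I)) := by
  have hn : ∀ (j : ℤ) (θ : ℝ), ‖Complex.exp (j * θ * Complex.I)‖ = 1 := by
    intro j θ
    have := Complex.norm_exp_ofReal_mul_I (j * θ)
    push_cast at this; exact this
  have key := intervalIntegral.hasSum_integral_of_dominated_convergence
    (μ := MeasureTheory.volume) (a := 0) (b := 2*Real.pi)
    (F := fun (k:ℕ) (θ:ℝ) => b k * Complex.exp (((k - j : ℤ) : ℂ) * θ * Complex.I))
    (f := fun θ => P θ * Complex.exp (-j * θ * Complex.I))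
    (bound := fun k _ => ‖b k‖)
    (fun k => (by fun_prop : Continuous _).aestronglyMeasurable)
    (fun k => Filter.Eventually.of_forall fun θ _ => by
      rw [norm_mul, hn, mul_one])
    (Filter.Eventually.of_forall fun θ _ => hb)
    (by simp)
    (Filter.Eventually.of_forall fun θ _ => by
      refine ((hP θ).mul_right (Complex.exp (-j * θ * Complex.I))).congr_aux fun k => ?_
      rw [mul_assoc (b k), ← Complex.exp_add]; congr 2; push_cast; ring)
  refine key.congr_aux fun k => ?_
  rw [intervalIntegral.integral_const_mul, exp_int]
  simp only [sub_eq_zero]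
  split_ifs <;> ring

lemma prob_bound (W : ℝ → ℝ) (hW : Continuous W) (hpos : ∀ θ, 0 ≤ W θ)
    (X Y : ℝ → ℂ) (hX : Continuous X) (hY : Continuous Y) (hX1 : ∀ θ, ‖X θ‖ = 1)
    (hY1 : ∀ θ, ‖Y θ‖ = 1) (x y z : ℂ)
    (h1 : ∫ θ in (0:ℝ)..(2*Real.pi), (W θ : ℂ) = 2 * Real.pi)
    (hx : ∫ θ in (0:ℝ)..(2*Real.pi), W θ * X θ = 2 * Real.pi * x)
    (hy : ∫ θ in (0:ℝ)..(2*Real.pi), W θ * Y θ = 2 * Real.pi * y)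
    (hz : ∫ θ in (0:ℝ)..(2*Real.pi), W θ * (X θ * Y θ) = 2 * Real.pi * z) :
    ‖z - 2 * x * y‖ ≤ 1 := by
  have hpi : (0:ℝ) ≤ 2 * Real.pi := by positivity
  have e1 : ∫ θ in (0:ℝ)..(2*Real.pi), (W θ : ℂ) * ((X θ - 2 * x) * Y θ)
      = 2 * Real.pi * (z - 2 * x * y) := by
    have : ∀ θ, (W θ : ℂ) * ((X θ - 2 * x) * Y θ)
      = W θ * (X θ * Y θ) - (2 * x) * (W θ * Y θ) := by intro θ; ring
    simp_rw [this]
    rw [intervalIntegral.integral_sub ((by fun_prop : Continuous _).intervalIntegrable _ _)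
      ((by fun_prop : Continuous _).intervalIntegrable _ _), intervalIntegral.integral_const_mul,
      hz, hy]
    ring
  have r1 : ∫ θ in (0:ℝ)..(2*Real.pi), W θ = 2 * Real.pi := by
    rw [intervalIntegral.integral_ofReal] at h1
    exact_mod_cast h1
  have r2 : ∫ θ in (0:ℝ)..(2*Real.pi), W θ * ((starRingEnd ℂ) x * X θ).re
      = 2 * Real.pi * ‖x‖ ^ 2 := by
    have h : ∫ θ in (0:ℝ)..(2*Real.pi), (starRingEnd ℂ) x * (W θ * X θ)
      = ((2 * Real.pi * ‖x‖ ^ 2 : ℝ) : ℂ) := by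
      rw [intervalIntegral.integral_const_mul, hx]
      push_cast
      rw [← Complex.conj_mul']; ring
    have h' := congrArg Complex.re h
    rw [Complex.ofReal_re] at h'
    rw [← h', ← Complex.reCLM_apply, ← ContinuousLinearMap.intervalIntegral_comp_comm _
      ((by fun_prop : Continuous _).intervalIntegrable _ _)]
    congr 1; ext θ
    simp; ring
  have e2 : ‖∫ θ in (0:ℝ)..(2*Real.pi), (W θ : ℂ) * ((X θ - 2 * x) * Y θ)‖ ≤
      ∫ θ in (0:ℝ)..(2*Real.pi),
        ((1 + 2 * ‖x‖ ^ 2) * W θ - 2 * (W θ * ((starRingEnd ℂ) x * X θ).re)) := by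
    apply intervalIntegral.norm_integral_le_of_norm_le hpi
    · refine Filter.Eventually.of_forall fun θ _ => ?_
      rw [norm_mul, norm_mul, hY1, Complex.norm_real, Real.norm_of_nonneg (hpos θ), mul_one]
      have hs : ‖X θ - 2 * x‖ ^ 2 = 1 - 4 * ((starRingEnd ℂ) x * X θ).re + 4 * ‖x‖ ^ 2 := by
        have h3 : ‖X θ‖ ^ 2 = 1 := by rw [hX1]; norm_num
        rw [← Complex.normSq_eq_norm_sq, Complex.normSq_apply] at h3 ⊢
        rw [← Complex.normSq_eq_norm_sq, Complex.normSq_apply]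
        simp
        linarith
      have := hpos θ
      nlinarith [sq_nonneg (‖X θ - 2 * x‖ - 1)]
    · exact (by fun_prop : Continuous _).intervalIntegrable _ _
  rw [e1, intervalIntegral.integral_sub ((by fun_prop : Continuous _).intervalIntegrable _ _)
      ((by fun_prop : Continuous _).intervalIntegrable _ _), intervalIntegral.integral_const_mul,
      intervalIntegral.integral_const_mul, r1, r2, norm_mul] at e2
  have : ‖(2 * Real.pi : ℂ)‖ = 2 * Real.pi := by simp [abs_of_pos Real.pi_pos]
  rw [this] at e2
  have := Real.pi_pos
  nlinarith

lemma livingston_r (c : ℕ → ℂ) (p : ℂ → ℂ) (hc0 : c 0 = 1)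
    (hp : ∀ z ∈ Metric.ball (0 : ℂ) 1, HasSum (fun k => c k * z ^ k) (p z))
    (hre : ∀ z ∈ Metric.ball (0 : ℂ) 1, 0 ≤ (p z).re) (s t : ℕ) (hs : 1 ≤ s) (ht : 1 ≤ t)
    (r : ℝ) (hr0 : 0 < r) (hr1 : r < 1) :
    ‖c s * r ^ s‖ ≤ 2 ∧ ‖(c s * c t - c (s + t)) * r ^ (s + t)‖ ≤ 2 := by
  set b : ℕ → ℂ := fun k => c k * r ^ k with hbdef
  have hb : Summable (fun k => ‖b k‖) := by
    refine (hp r ?_).summable.norm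
    simp [abs_of_pos hr0, hr1]
  have hn : ∀ (j : ℤ) (θ : ℝ), ‖Complex.exp (j * θ * Complex.I)‖ = 1 := by
    intro j θ
    have := Complex.norm_exp_ofReal_mul_I (j * θ)
    push_cast at this; exact this
  have hmem : ∀ θ : ℝ, (r * Complex.exp (θ * Complex.I)) ∈ Metric.ball (0:ℂ) 1 := by
    intro θ
    simp [Complex.norm_exp_ofReal_mul_I, abs_of_pos hr0, hr1]
  set P : ℝ → ℂ := fun θ => p (r * Complex.exp (θ * Complex.I)) with hPdef
  have hP : ∀ θ : ℝ, HasSum (fun k : ℕ => b k * Complex.exp (k * θ * Complex.I)) (P θ) := by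
    intro θ
    convert hp _ (hmem θ) using 2 with k
    rw [mul_pow, ← Complex.exp_nat_mul, hbdef]
    simp only
    rw [← mul_assoc, ← mul_assoc]
  have hPc : Continuous P := by
    have : P = fun θ : ℝ => ∑' k : ℕ, b k * Complex.exp (k * θ * Complex.I) := by
      ext θ; exact (hP θ).tsum_eq.symm
    rw [this]
    refine continuous_tsum (fun k => by fun_prop) hb ?_
    intro k θ
    rw [norm_mul]
    have := hn k θ
    push_cast at this
    rw [this, mul_one]
  have I1 : ∀ k : ℕ, ∫ θ in (0:ℝ)..(2*Real.pi), P θ * Complex.exp (-(k:ℤ) * θ * Complex.I)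
      = 2 * Real.pi * b k := by
    intro k
    have h := fourier_sum b hb P hP k
    refine h.unique ?_
    convert hasSum_ite_eq k (2 * Real.pi * b k) using 2 with k'
    by_cases h : k' = k <;> simp [h]
  have I2 : ∀ k : ℕ, 1 ≤ k →
      ∫ θ in (0:ℝ)..(2*Real.pi), P θ * Complex.exp ((k:ℤ) * θ * Complex.I) = 0 := by
    intro k hk
    have h := fourier_sum b hb P hP (-(k:ℤ))
    refine HasSum.unique (by simpa using h) ?_
    convert hasSum_zero using 2 with k'
    rw [if_neg]
    omega
  set W : ℝ → ℝ := fun θ => (P θ).re with hWdef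
  have hWc : Continuous W := Complex.continuous_re.comp hPc
  have hWP : ∀ θ, (W θ : ℂ) = (P θ + (starRingEnd ℂ) (P θ)) / 2 := by
    intro θ; rw [Complex.add_conj]; simp [hWdef]
  have hcc : Continuous fun θ => (starRingEnd ℂ) (P θ) := Complex.continuous_conj.comp hPc
  have conjI : ∀ k : ℤ, ∫ θ in (0:ℝ)..(2*Real.pi),
      (starRingEnd ℂ) (P θ) * Complex.exp (-k * θ * Complex.I) =
      (starRingEnd ℂ) (∫ θ in (0:ℝ)..(2*Real.pi), P θ * Complex.exp (k * θ * Complex.I)) := by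
    intro k
    rw [intervalIntegral.integral_of_le (by positivity), intervalIntegral.integral_of_le (by positivity),
      ← integral_conj]
    congr 1; ext θ
    rw [map_mul, ← Complex.exp_conj]
    simp
  have J : ∀ k : ℕ, ∫ θ in (0:ℝ)..(2*Real.pi), (W θ : ℂ) * Complex.exp (-(k:ℤ) * θ * Complex.I)
      = (2 * Real.pi * b k + (starRingEnd ℂ) (∫ θ in (0:ℝ)..(2*Real.pi),
        P θ * Complex.exp ((k:ℤ) * θ * Complex.I))) / 2 := by
    intro k
    rw [← conjI, ← I1, ← intervalIntegral.integral_add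
      ((by fun_prop : Continuous _).intervalIntegrable _ _)
      ((by fun_prop : Continuous _).intervalIntegrable _ _), ← intervalIntegral.integral_div]
    congr 1; ext θ
    rw [hWP]; ring
  have J0 : ∫ θ in (0:ℝ)..(2*Real.pi), (W θ : ℂ) = 2 * Real.pi := by
    have h := J 0
    have h' := I1 0
    simp only [Nat.cast_zero, Int.cast_zero, neg_zero, zero_mul, Complex.exp_zero, mul_one] at h h'
    rw [h, h']
    have h2 : (starRingEnd ℂ) 2 = 2 := map_ofNat _ 2
    simp [hbdef, hc0, h2]
  have Jk : ∀ k : ℕ, 1 ≤ k → ∫ θ in (0:ℝ)..(2*Real.pi),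
      (W θ : ℂ) * Complex.exp (-(k:ℤ) * θ * Complex.I) = 2 * Real.pi * (b k / 2) := by
    intro k hk
    rw [J, I2 k hk]; simp; ring
  have hn' : ∀ (k : ℕ) (θ : ℝ), ‖Complex.exp (-(k:ℤ) * θ * Complex.I)‖ = 1 := by
    intro k θ
    have := hn (-k) θ
    push_cast at this ⊢; exact this
  have hWpos : ∀ θ, 0 ≤ W θ := fun θ => hre _ (hmem θ)
  have main := prob_bound W hWc hWpos _ _ (by fun_prop) (by fun_prop) (hn' s) (hn' t)
    (b s / 2) (b t / 2) (b (s+t) / 2) J0 (Jk s hs) (Jk t ht) (by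
      rw [← Jk (s+t) (by omega)]
      congr 1; ext θ
      rw [← Complex.exp_add]; congr 2; push_cast; ring)
  refine ⟨?_, ?_⟩
  · have h : ‖∫ θ in (0:ℝ)..(2*Real.pi), (W θ : ℂ) * Complex.exp (-(s:ℤ) * θ * Complex.I)‖ ≤
        ∫ θ in (0:ℝ)..(2*Real.pi), W θ := by
      apply intervalIntegral.norm_integral_le_of_norm_le (by positivity)
      · refine Filter.Eventually.of_forall fun θ _ => ?_
        rw [norm_mul, hn', Complex.norm_real, Real.norm_of_nonneg (hWpos θ), mul_one]
      · exact hWc.intervalIntegrable _ _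
    have r1 : ∫ θ in (0:ℝ)..(2*Real.pi), W θ = 2 * Real.pi := by
      rw [intervalIntegral.integral_ofReal] at J0
      exact_mod_cast J0
    rw [Jk s hs, r1, norm_mul, norm_div] at h
    have e : ‖(2 * Real.pi : ℂ)‖ = 2 * Real.pi := by simp [abs_of_pos Real.pi_pos]
    rw [e] at h
    norm_num at h
    have := Real.pi_pos
    change ‖b s‖ ≤ 2
    nlinarith
  · have e : (c s * c t - c (s + t)) * r ^ (s + t) =
      -2 * (b (s+t) / 2 - 2 * (b s / 2) * (b t / 2)) := by
      simp only [hbdef]; ring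
    rw [e, norm_mul]
    norm_num
    linarith

lemma lim_bound (u : ℂ) (k : ℕ) (h : ∀ r : ℝ, 0 < r → r < 1 → ‖u * r ^ k‖ ≤ 2) : ‖u‖ ≤ 2 := by
  have hc : Continuous fun r : ℝ => ‖u * (r:ℂ) ^ k‖ := by fun_prop
  have ht : Filter.Tendsto (fun r : ℝ => ‖u * (r:ℂ) ^ k‖) (nhdsWithin 1 (Set.Iio 1))
      (nhds ‖u‖) := by
    have := (hc.tendsto 1).mono_left (nhdsWithin_le_nhds (s := Set.Iio 1))
    simpa using this
  refine le_of_tendsto ht ?_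
  filter_upwards [Ioo_mem_nhdsLT (show (0:ℝ) < 1 by norm_num)] with r hr
  exact h r hr.1 hr.2

theorem generalized_zalcman_re_f_div_z
    (β : ℝ) (hβ : β < 1) (f : ℂ → ℂ) (a : ℕ → ℂ)
    (ha0 : a 0 = 0) (ha1 : a 1 = 1)
    (hf : ∀ z ∈ Metric.ball (0 : ℂ) 1, HasSum (fun k => a k * z ^ k) (f z))
    (hre : ∀ z ∈ Metric.ball (0 : ℂ) 1, z ≠ 0 → β < (f z / z).re)
    (lam : ℝ) (n m : ℕ) (hn : 2 ≤ n) (hm : 2 ≤ m) :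
    (0 ≤ lam ∧ lam ≤ 1 / (1 - β) →
      ‖(lam : ℂ) * a n * a m - a (n + m - 1)‖ ≤ 2 * (1 - β)) ∧
    (lam < 0 ∨ 1 / (1 - β) < lam →
      ‖(lam : ℂ) * a n * a m - a (n + m - 1)‖ ≤ 2 * (1 - β) * |2 * lam * (1 - β) - 1|) := by
  have hd : 0 < 1 - β := by linarith
  have hdc : (1 - β : ℂ) ≠ 0 := by exact_mod_cast hd.ne'
  set c : ℕ → ℂ := fun k => (a (k+1) - if k = 0 then (β:ℂ) else 0) / (1 - β) with hc
  set p : ℂ → ℂ := fun z => if z = 0 then 1 else (f z / z - β) / (1 - β) with hpdef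
  have hc0 : c 0 = 1 := by simp [hc, ha1, hdc]
  have hck : ∀ k, 1 ≤ k → a (k+1) = (1 - β) * c k := by
    intro k hk
    have : k ≠ 0 := by omega
    simp only [hc, this, if_false, sub_zero]
    field_simp
  have hp : ∀ z ∈ Metric.ball (0 : ℂ) 1, HasSum (fun k => c k * z ^ k) (p z) := by
    intro z hz
    by_cases h0 : z = 0
    · subst h0
      have : HasSum (fun k : ℕ => if k = 0 then (1:ℂ) else 0) 1 := hasSum_ite_eq 0 1
      simp only [hpdef, if_true]
      convert this using 2 with k
      rcases Nat.eq_zero_or_pos k with h | h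
      · simp [h, hc0]
      · simp [h.ne']
    · have h1 : HasSum (fun k => a (k+1) * z ^ (k+1)) (f z) := by
        have := (hasSum_nat_add_iff' (f := fun k => a k * z ^ k) (g := f z) 1).mpr (hf z hz)
        simpa [ha0] using this
      have h2 := ((h1.div_const z).sub (hasSum_ite_eq 0 (β:ℂ))).div_const (1 - β : ℂ)
      simp only [hpdef, h0, if_false]
      refine h2.congr_aux fun k => ?_
      simp only [hc]
      rcases Nat.eq_zero_or_pos k with h | h
      · subst h; simp [h0]
      · simp only [h.ne', if_false]; field_simp
        ring
  have hpre : ∀ z ∈ Metric.ball (0 : ℂ) 1, 0 ≤ (p z).re := by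
    intro z hz
    by_cases h0 : z = 0
    · simp [hpdef, h0]
    · simp only [hpdef, h0, if_false]
      have e : (1 - β : ℂ) = ((1 - β : ℝ) : ℂ) := by push_cast; rfl
      rw [e, Complex.div_ofReal_re, Complex.sub_re, Complex.ofReal_re]
      exact div_nonneg (by linarith [hre z hz h0]) hd.le
  have L := livingston_r c p hc0 hp hpre
  obtain ⟨s, rfl⟩ : ∃ s, n = s + 1 := ⟨n - 1, by omega⟩
  obtain ⟨t, rfl⟩ : ∃ t, m = t + 1 := ⟨m - 1, by omega⟩
  have hs : 1 ≤ s := by omega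
  have ht : 1 ≤ t := by omega
  have B1 : ∀ k, 1 ≤ k → ‖c k‖ ≤ 2 := fun k hk =>
    lim_bound _ k fun r h0 h1 => (L k k hk hk r h0 h1).1
  have B2 : ‖c s * c t - c (s+t)‖ ≤ 2 :=
    lim_bound _ (s+t) fun r h0 h1 => (L s t hs ht r h0 h1).2
  have B3 : ‖c s * c t‖ ≤ 4 := by
    rw [norm_mul]
    nlinarith [B1 s hs, B1 t ht, norm_nonneg (c s), norm_nonneg (c t)]
  have B4 := B1 (s+t) (by omega)
  have e1 : s + 1 + (t + 1) - 1 = (s + t) + 1 := by omega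
  obtain ⟨q, hq⟩ : ∃ q : ℝ, q = lam * (1 - β) := ⟨_, rfl⟩
  have e2 : (lam : ℂ) * a (s+1) * a (t+1) - a (s + 1 + (t + 1) - 1) =
      ((1 - β : ℝ) : ℂ) * ((q : ℂ) * (c s * c t) - c (s+t)) := by
    rw [e1, hck s hs, hck t ht, hck (s+t) (by omega), hq]; push_cast; ring
  rw [e2, norm_mul, Complex.norm_real, Real.norm_of_nonneg hd.le]
  constructor
  · rintro ⟨h0, h1⟩
    rw [le_div_iff₀ hd, ← hq] at h1
    have hq0 : 0 ≤ q := by rw [hq]; positivity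
    have : (q : ℂ) * (c s * c t) - c (s+t) =
      (q:ℂ) * (c s * c t - c (s+t)) + ((1 - q : ℝ) : ℂ) * (-c (s+t)) := by push_cast; ring
    have hb : ‖(q : ℂ) * (c s * c t) - c (s+t)‖ ≤ 2 := by
      rw [this]
      refine (norm_add_le _ _).trans ?_
      rw [norm_mul, norm_mul, norm_neg, Complex.norm_real, Complex.norm_real,
        Real.norm_of_nonneg hq0, Real.norm_of_nonneg (by linarith)]
      nlinarith
    nlinarith
  · have e3 : 2 * lam * (1 - β) - 1 = 2 * q - 1 := by rw [hq]; ring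
    rw [e3]
    intro h
    have hb : ‖(q : ℂ) * (c s * c t) - c (s+t)‖ ≤ 2 * |2 * q - 1| := by
      rcases h with h | h
      · have hq0 : q < 0 := by rw [hq]; exact mul_neg_of_neg_of_pos h hd
        refine (norm_sub_le _ _).trans ?_
        rw [norm_mul, Complex.norm_real, Real.norm_of_nonpos hq0.le,
          abs_of_neg (by linarith)]
        nlinarith
      · rw [div_lt_iff₀ hd, ← hq] at h
        have : (q : ℂ) * (c s * c t) - c (s+t) =
          ((q - 1 : ℝ) : ℂ) * (c s * c t) + (c s * c t - c (s+t)) := by push_cast; ring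
        rw [this]
        refine (norm_add_le _ _).trans ?_
        rw [norm_mul, Complex.norm_real, Real.norm_of_nonneg (by linarith),
          abs_of_pos (by linarith)]
        nlinarith
    nlinarith
end

section
/- Let f(z) = z + Σ_{n≥2} a_n zⁿ be a typically real function on the open unit disc 𝔻 and let λ ≥ 1 be a real number. If m ≥ 2 is even, then |λ a_2 a_m − a_{m+1}| ≤ 3 + (2λ−1)(m−2) for 1 ≤ λ ≤ 3/2, and |λ a_2 a_m − a_{m+1}| ≤ 2λm − m − 1 for λ ≥ 3/2. -/
open MeasureTheory intervalIntegral in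
lemma zal_orth (k n : ℕ) (hn : 1 ≤ n) :
    ∫ x in (0:ℝ)..Real.pi, Real.sin (k * x) * Real.sin (n * x) = if k = n then Real.pi / 2 else 0 := by
  have key : ∀ j : ℤ, ∫ x in (0:ℝ)..Real.pi, Real.cos (j * x) = if j = 0 then Real.pi else 0 := by
    intro j
    split_ifs with h
    · simp [h]
    · have hj : (j : ℝ) ≠ 0 := by exact_mod_cast h
      rw [intervalIntegral.integral_comp_mul_left (fun x => Real.cos x) hj, integral_cos]
      simp [Real.sin_int_mul_pi]
  have e : ∀ x : ℝ, Real.sin (k * x) * Real.sin (n * x) =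
      (1/2) * Real.cos (((k - n : ℤ) : ℝ) * x) - (1/2) * Real.cos (((k + n : ℤ) : ℝ) * x) := by
    intro x
    push_cast
    rw [sub_mul, add_mul, Real.cos_sub, Real.cos_add]; ring
  simp_rw [e]
  rw [intervalIntegral.integral_sub (Continuous.intervalIntegrable (by fun_prop) _ _)
    (Continuous.intervalIntegrable (by fun_prop) _ _), intervalIntegral.integral_const_mul,
    intervalIntegral.integral_const_mul, key, key]
  have h2 : ¬ ((k:ℤ) + n = 0) := by omega
  rw [if_neg h2]
  by_cases h : k = n
  · simp [h]; ring
  · have : ¬ ((k:ℤ) - n = 0) := by omega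
    rw [if_neg this, if_neg h]; ring

lemma zal_pos
    (f : ℂ → ℂ) (a : ℕ → ℝ) (ha1 : a 1 = 1)
    (hf : ∀ z ∈ Metric.ball (0 : ℂ) 1, HasSum (fun k => (a k : ℂ) * z ^ k) (f z))
    (htr : ∀ z ∈ Metric.ball (0 : ℂ) 1, ((f z).im = 0 ↔ z.im = 0))
    (m : ℕ) (hm : 1 ≤ m) (c1 c2 c3 c4 : ℝ)
    (hc : ∀ x : ℝ, 0 < x → x < Real.pi → 0 ≤ c1 * Real.sin x + c2 * Real.sin (2 * x)
      + c3 * Real.sin (m * x) + c4 * Real.sin ((m + 1) * x)) :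
    0 ≤ c1 + c2 * a 2 + c3 * a m + c4 * a (m + 1) := by
  have main : ∀ r : ℝ, 0 < r → r < 1 →
      0 ≤ c1 * r + c2 * (a 2 * r ^ 2) + c3 * (a m * r ^ m) + c4 * (a (m + 1) * r ^ (m + 1)) := by
    intro r hr0 hr1
    set z : ℝ → ℂ := fun x => (r : ℂ) * Complex.exp (x * Complex.I) with hz
    have hzb : ∀ x, z x ∈ Metric.ball (0 : ℂ) 1 := by
      intro x
      simp [hz, Complex.norm_exp_ofReal_mul_I, abs_of_pos hr0, hr1]
    have hzim : ∀ x, (z x).im = r * Real.sin x := by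
      intro x
      simp [hz, Complex.exp_ofReal_mul_I_im]
    set g : ℝ → ℝ := fun x => (f (z x)).im with hg
    have hsum : ∀ x, HasSum (fun k : ℕ => a k * r ^ k * Real.sin (k * x)) (g x) := by
      intro x
      have h := Complex.hasSum_im (hf (z x) (hzb x))
      convert h using 2 with k
      have : (a k : ℂ) * z x ^ k = ((a k * r ^ k : ℝ) : ℂ) * Complex.exp (((k * x : ℝ) : ℂ) * Complex.I) := by
        simp only [hz, mul_pow, ← Complex.exp_nat_mul]
        push_cast
        ring_nf
      rw [this, Complex.im_ofReal_mul, Complex.exp_ofReal_mul_I_im]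
    have habs : Summable (fun k : ℕ => |a k * r ^ k|) := by
      have h := (hf (r : ℂ) (by simp [abs_of_pos hr0, hr1])).summable.norm
      convert h using 2 with k
      rw [← Complex.ofReal_pow, ← Complex.ofReal_mul, Complex.norm_real, Real.norm_eq_abs]
    have hgc : Continuous g := by
      have : g = fun x => ∑' k : ℕ, a k * r ^ k * Real.sin (k * x) := by
        funext x; exact (hsum x).tsum_eq.symm
      rw [this]
      refine continuous_tsum (fun k => by fun_prop) habs ?_
      intro k x
      rw [Real.norm_eq_abs, abs_mul]
      exact mul_le_of_le_one_right (abs_nonneg _) (Real.abs_sin_le_one _)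
    have hint : ∀ n : ℕ, 1 ≤ n →
        ∫ x in (0:ℝ)..Real.pi, g x * Real.sin (n * x) = a n * r ^ n * (Real.pi / 2) := by
      intro n hn
      have h := intervalIntegral.hasSum_integral_of_dominated_convergence
        (μ := MeasureTheory.volume) (a := (0:ℝ)) (b := Real.pi)
        (F := fun (k : ℕ) x => a k * r ^ k * Real.sin (k * x) * Real.sin (n * x))
        (f := fun x => g x * Real.sin (n * x))
        (fun k _ => |a k * r ^ k|)
        (fun k => Continuous.aestronglyMeasurable (by fun_prop))
        (fun k => Filter.Eventually.of_forall fun x _ => by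
          rw [Real.norm_eq_abs, abs_mul, abs_mul, mul_assoc]
          refine mul_le_of_le_one_right (abs_nonneg _) ?_
          exact mul_le_one₀ (Real.abs_sin_le_one _) (abs_nonneg _) (Real.abs_sin_le_one _))
        (Filter.Eventually.of_forall fun x _ => habs)
        (by simp)
        (Filter.Eventually.of_forall fun x _ => (hsum x).mul_right _)
      have h2 : HasSum (fun k : ℕ => ∫ x in (0:ℝ)..Real.pi,
          a k * r ^ k * Real.sin (k * x) * Real.sin (n * x)) (a n * r ^ n * (Real.pi / 2)) := by
        have e : ∀ k : ℕ, ∫ x in (0:ℝ)..Real.pi,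
          a k * r ^ k * Real.sin (k * x) * Real.sin (n * x) =
            if k = n then a n * r ^ n * (Real.pi / 2) else 0 := by
          intro k
          simp_rw [mul_assoc (a k * r ^ k)]
          rw [intervalIntegral.integral_const_mul, zal_orth k n hn]
          split_ifs with hk
          · rw [hk]
          · simp
        simp_rw [e]
        exact hasSum_ite_eq n _
      exact h.unique h2
    have hne : ∀ x ∈ Set.Ioo 0 Real.pi, g x ≠ 0 := by
      intro x hx h
      have := (htr (z x) (hzb x)).1 h
      rw [hzim] at this
      have := Real.sin_pos_of_pos_of_lt_pi hx.1 hx.2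
      have := mul_pos hr0 this
      linarith
    have hpi := Real.pi_pos
    have hgpos : ∀ x ∈ Set.Ioo 0 Real.pi, 0 < g x := by
      by_contra! hcon
      obtain ⟨x0, hx0, hx0'⟩ := hcon
      have hneg : ∀ x ∈ Set.Ioo 0 Real.pi, g x ≤ 0 := by
        intro x hx
        by_contra! hpos
        obtain ⟨y, hy, hy0⟩ := (isPreconnected_Ioo (a := (0:ℝ)) (b := Real.pi)).intermediate_value
          hx0 hx hgc.continuousOn ⟨hx0', hpos.le⟩
        exact hne y hy hy0
      have h1 := hint 1 le_rfl
      have h2 : ∫ x in (0:ℝ)..Real.pi, g x * Real.sin ((1:ℕ) * x) ≤ ∫ x in (0:ℝ)..Real.pi, (0:ℝ) := by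
        refine intervalIntegral.integral_mono_on_of_le_Ioo hpi.le
          (Continuous.intervalIntegrable (by fun_prop) _ _) (by simp) ?_
        intro x hx
        have := Real.sin_pos_of_pos_of_lt_pi hx.1 hx.2
        have := hneg x hx
        simp only [Nat.cast_one, one_mul]
        nlinarith
      rw [h1, ha1] at h2
      simp at h2
      nlinarith [mul_pos hr0 hpi]
    have hfin : (0:ℝ) ≤ ∫ x in (0:ℝ)..Real.pi, (c1 * (g x * Real.sin ((1:ℕ) * x))
        + c2 * (g x * Real.sin ((2:ℕ) * x)) + c3 * (g x * Real.sin (m * x))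
        + c4 * (g x * Real.sin ((m + 1 : ℕ) * x))) := by
      have h2 : ∫ x in (0:ℝ)..Real.pi, (0:ℝ) ≤ ∫ x in (0:ℝ)..Real.pi, (c1 * (g x * Real.sin ((1:ℕ) * x))
        + c2 * (g x * Real.sin ((2:ℕ) * x)) + c3 * (g x * Real.sin (m * x))
        + c4 * (g x * Real.sin ((m + 1 : ℕ) * x))) := by
        refine intervalIntegral.integral_mono_on_of_le_Ioo hpi.le (by simp)
          (Continuous.intervalIntegrable (by fun_prop) _ _) ?_
        intro x hx
        have h := mul_nonneg (hgpos x hx).le (hc x hx.1 hx.2)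
        push_cast
        rw [one_mul]
        linarith
      simpa using h2
    rw [intervalIntegral.integral_add (Continuous.intervalIntegrable (by fun_prop) _ _)
        (Continuous.intervalIntegrable (by fun_prop) _ _),
      intervalIntegral.integral_add (Continuous.intervalIntegrable (by fun_prop) _ _)
        (Continuous.intervalIntegrable (by fun_prop) _ _),
      intervalIntegral.integral_add (Continuous.intervalIntegrable (by fun_prop) _ _)
        (Continuous.intervalIntegrable (by fun_prop) _ _),
      intervalIntegral.integral_const_mul, intervalIntegral.integral_const_mul,
      intervalIntegral.integral_const_mul, intervalIntegral.integral_const_mul,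
      hint 1 le_rfl, hint 2 (by norm_num), hint m hm, hint (m+1) (by omega), ha1] at hfin
    by_contra! hcon
    nlinarith [mul_pos_of_neg_of_neg hcon (neg_neg_of_pos hpi)]
  have hcont : Continuous (fun r : ℝ => c1 * r + c2 * (a 2 * r ^ 2) + c3 * (a m * r ^ m)
      + c4 * (a (m + 1) * r ^ (m + 1))) := by fun_prop
  have hlim := (hcont.tendsto 1).mono_left (nhdsWithin_le_nhds (s := Set.Iio (1:ℝ)))
  have := ge_of_tendsto hlim (by
    filter_upwards [Ioo_mem_nhdsLT (show (0:ℝ) < 1 by norm_num)] with r hr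
    exact main r hr.1 hr.2)
  simpa using this

lemma zal_sin (n : ℕ) (x : ℝ) : |Real.sin (n * x)| ≤ n * |Real.sin x| := by
  induction n with
  | zero => simp
  | succ n ih =>
    have : Real.sin ((n + 1 : ℕ) * x) = Real.sin (n * x) * Real.cos x + Real.cos (n * x) * Real.sin x := by
      push_cast; rw [add_mul, one_mul, Real.sin_add]
    rw [this]
    refine (abs_add_le _ _).trans ?_
    rw [abs_mul, abs_mul]
    have h1 := Real.abs_cos_le_one x
    have h2 := Real.abs_cos_le_one (n * x)
    have := mul_le_of_le_one_right (abs_nonneg (Real.sin (n * x))) h1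
    have := mul_le_of_le_one_left (abs_nonneg (Real.sin x)) h2
    push_cast
    linarith

/-- pointwise facts about `t = cos x`, `y = sin (m x) / (m sin x)` -/
lemma zal_pt (m : ℕ) (hm : 2 ≤ m) (hme : Even m) (x : ℝ) (h0 : 0 < x) (h1 : x < Real.pi) :
    ∃ y : ℝ, Real.sin (m * x) = m * y * Real.sin x ∧ y ^ 2 ≤ 1 ∧
      1 - Real.cos (m * x) ≤ m * (2 - Real.cos x ^ 2 - y ^ 2) ∧
      1 + Real.cos (m * x) ≤ m * (2 - 3 / 4 * (Real.cos x ^ 2 + y ^ 2) + 1 / 2 * (Real.cos x * y)) := by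
  have hs := Real.sin_pos_of_pos_of_lt_pi h0 h1
  have hmR : (2:ℝ) ≤ m := by exact_mod_cast hm
  have hm0 : (0:ℝ) < m := by linarith
  set t := Real.cos x with ht
  have ht2 : t ^ 2 ≤ 1 := Real.cos_sq_le_one x
  obtain ⟨y, hy⟩ : ∃ y : ℝ, Real.sin (m * x) = m * y * Real.sin x :=
    ⟨Real.sin (m * x) / (m * Real.sin x), by field_simp⟩
  have hyabs : |y| ≤ 1 := by
    have h := zal_sin m x
    rw [hy, abs_mul, abs_mul, abs_of_pos hm0] at h
    have : 0 < m * |Real.sin x| := mul_pos hm0 (abs_pos.2 hs.ne')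
    by_contra! hc
    nlinarith
  have hy2 : y ^ 2 ≤ 1 := by rw [← sq_abs]; nlinarith [abs_nonneg y]
  obtain ⟨h, rfl⟩ := hme
  have hhR : (1:ℝ) ≤ h := by
    have : 1 ≤ h := by omega
    exact_mod_cast this
  have hcast : ((h + h : ℕ) : ℝ) * x = 2 * (h * x) := by push_cast; ring
  refine ⟨y, hy, hy2, ?_, ?_⟩
  · rw [hcast] at hy ⊢
    rw [Real.sin_two_mul] at hy
    rw [Real.cos_two_mul]
    have hyc : y ^ 2 ≤ Real.cos (h * x) ^ 2 := by
      have hb := zal_sin h x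
      have hb2 : Real.sin (h * x) ^ 2 ≤ (h * Real.sin x) ^ 2 := by
        rw [abs_of_pos hs] at hb
        rw [← sq_abs]
        exact pow_le_pow_left₀ (abs_nonneg _) hb 2
      have e : (h * Real.sin x) ^ 2 * y ^ 2 = Real.sin (h * x) ^ 2 * Real.cos (h * x) ^ 2 := by
        push_cast at hy
        have : h * y * Real.sin x = Real.sin (h * x) * Real.cos (h * x) := by linarith
        calc _ = (h * y * Real.sin x) ^ 2 := by ring
          _ = _ := by rw [this]; ring
      have hp : 0 < (h * Real.sin x) ^ 2 := by positivity
      have : (h * Real.sin x) ^ 2 * y ^ 2 ≤ (h * Real.sin x) ^ 2 * Real.cos (h * x) ^ 2 := by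
        rw [e]; exact mul_le_mul_of_nonneg_right hb2 (sq_nonneg _)
      exact le_of_mul_le_mul_left this hp
    have hc1 := Real.cos_sq_le_one (h * x)
    nlinarith [mul_le_mul_of_nonneg_right hmR (show 0 ≤ 1 - Real.cos (h * x) ^ 2 by linarith)]
  · by_cases hh : h = 1
    · subst hh
      have hyt : y = t := by
        have e : ((1 + 1 : ℕ) : ℝ) = 2 := by norm_num
        rw [e, Real.sin_two_mul] at hy
        have : Real.sin x * y = Real.sin x * t := by linarith
        exact mul_left_cancel₀ hs.ne' this
      have e : ((1 + 1 : ℕ) : ℝ) = 2 := by norm_num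
      rw [e, Real.cos_two_mul, hyt]
      nlinarith
    · have hm4 : (4:ℝ) ≤ ((h + h : ℕ) : ℝ) := by
        have : 4 ≤ h + h := by omega
        exact_mod_cast this
      have hcos := Real.cos_le_one (((h + h : ℕ) : ℝ) * x)
      have hcore : 1 / 2 ≤ 2 - 3 / 4 * (t ^ 2 + y ^ 2) + 1 / 2 * (t * y) := by
        by_cases hty : 0 ≤ t * y
        · nlinarith
        · push Not at hty
          have hyh : |y| ≤ 1 / 2 := by
            -- reduce to an angle in `(0, π/2]`
            have red : ∀ v : ℝ, 0 < v → v ≤ Real.pi / 2 → ∀ Y : ℝ,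
                Real.sin (((h + h : ℕ) : ℝ) * v) = ((h + h : ℕ) : ℝ) * Y * Real.sin v → Y < 0 →
                |Y| ≤ 1 / 2 := by
              intro v hv0 hv1 Y hY hYn
              have hsv := Real.mul_le_sin hv0.le hv1
              have hsv0 : 0 < Real.sin v :=
                Real.sin_pos_of_pos_of_lt_pi hv0 (by linarith [Real.pi_pos])
              have hbig : Real.pi < ((h + h : ℕ) : ℝ) * v := by
                by_contra! hcon
                have h1 := Real.sin_nonneg_of_nonneg_of_le_pi (by positivity) hcon
                rw [hY] at h1
                have : ((h + h : ℕ) : ℝ) * Y * Real.sin v < 0 :=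
                  mul_neg_of_neg_of_pos (mul_neg_of_pos_of_neg hm0 hYn) hsv0
                linarith
              have h2 : 2 < ((h + h : ℕ) : ℝ) * Real.sin v := by
                have h3 : 2 < ((h + h : ℕ) : ℝ) * (2 / Real.pi * v) := by
                  have : ((h + h : ℕ) : ℝ) * (2 / Real.pi * v) = 2 * (((h + h : ℕ) : ℝ) * v) / Real.pi := by
                    ring
                  rw [this, lt_div_iff₀ Real.pi_pos]
                  linarith
                exact h3.trans_le (mul_le_mul_of_nonneg_left hsv hm0.le)
              have h4 := Real.neg_one_le_sin (((h + h : ℕ) : ℝ) * v)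
              rw [hY] at h4
              rw [abs_of_neg hYn]
              nlinarith
            rcases lt_or_ge t 0 with htn | htp
            · have hyp : 0 < y := by
                by_contra! hc
                nlinarith
              have hx2 : Real.pi / 2 < x := by
                by_contra! hc
                have := Real.cos_nonneg_of_mem_Icc (x := x) ⟨by linarith, hc⟩
                linarith
              have := red (Real.pi - x) (by linarith) (by linarith) (-y) (by
                rw [Real.sin_pi_sub]
                have : ((h + h : ℕ) : ℝ) * (Real.pi - x) = h * (2 * Real.pi) - ((h + h : ℕ) : ℝ) * x := by
                  push_cast; ring
                rw [this, Real.sin_nat_mul_two_pi_sub, hy]; ring) (by linarith)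
              rwa [abs_neg] at this
            · have hyn : y < 0 := by
                by_contra! hc
                nlinarith
              have hx2 : x ≤ Real.pi / 2 := by
                by_contra! hc
                have := Real.cos_neg_of_pi_div_two_lt_of_lt hc (by linarith)
                linarith
              exact red x h0 hx2 y hy hyn
          have hta : |t| ≤ 1 := Real.abs_cos_le_one x
          have hm' : |t * y| ≤ 1 / 2 := by
            rw [abs_mul]
            nlinarith [abs_nonneg t, abs_nonneg y]
          have hy4 : y ^ 2 ≤ 1 / 4 := by
            rw [← sq_abs]; nlinarith [abs_nonneg y]
          have := neg_abs_le (t * y)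
          linarith
      nlinarith

theorem zalcman_typically_real_n2_m_even
    (f : ℂ → ℂ) (a : ℕ → ℝ)
    (ha0 : a 0 = 0) (ha1 : a 1 = 1)
    (hf : ∀ z ∈ Metric.ball (0 : ℂ) 1, HasSum (fun k => (a k : ℂ) * z ^ k) (f z))
    (htr : ∀ z ∈ Metric.ball (0 : ℂ) 1, ((f z).im = 0 ↔ z.im = 0))
    (lam : ℝ) (hlam : 1 ≤ lam) (m : ℕ) (hm : 2 ≤ m) (hme : Even m) :
    (1 ≤ lam ∧ lam ≤ 3 / 2 →
      |lam * a 2 * a m - a (m + 1)| ≤ 3 + (2 * lam - 1) * ((m : ℝ) - 2)) ∧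
    (3 / 2 ≤ lam →
      |lam * a 2 * a m - a (m + 1)| ≤ 2 * lam * m - m - 1) := by
  have hmR : (2:ℝ) ≤ m := by exact_mod_cast hm
  have hm0 : (0:ℝ) < m := by linarith
  have P := fun c1 c2 c3 c4 => zal_pos f a ha1 hf htr m (by omega) c1 c2 c3 c4
  -- positivity in terms of `t` and `y`
  have Q : ∀ α β γ δ : ℝ,
      (∀ t y C : ℝ, t ^ 2 ≤ 1 → y ^ 2 ≤ 1 → -1 ≤ C → C ≤ 1 →
        1 - C ≤ m * (2 - t ^ 2 - y ^ 2) →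
        1 + C ≤ m * (2 - 3 / 4 * (t ^ 2 + y ^ 2) + 1 / 2 * (t * y)) →
        0 ≤ α + β * t + γ * y + δ * (m * (t * y) + C)) →
      0 ≤ α + β * (a 2 / 2) + γ * (a m / m) + δ * a (m + 1) := by
    intro α β γ δ H
    have := P α (β / 2) (γ / m) δ (by
      intro x hx0 hx1
      obtain ⟨y, hy, hy2, hA, hB⟩ := zal_pt m hm hme x hx0 hx1
      have hs := Real.sin_pos_of_pos_of_lt_pi hx0 hx1
      have h := mul_nonneg (H (Real.cos x) y (Real.cos (m * x)) (Real.cos_sq_le_one x) hy2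
        (Real.neg_one_le_cos _) (Real.cos_le_one _) hA hB) hs.le
      have e : Real.sin ((m + 1) * x) = (m * (Real.cos x * y) + Real.cos (m * x)) * Real.sin x := by
        rw [add_mul, one_mul, Real.sin_add, hy]; ring
      rw [e, hy, Real.sin_two_mul]
      have e2 : γ / m * (m * y * Real.sin x) = γ * y * Real.sin x := by field_simp
      rw [e2]
      linarith)
    have e3 : γ * (a m / m) = γ / m * a m := by ring
    rw [e3]
    linarith
  set p := a 2 / 2 with hp
  set q := a m / m with hq
  have e2 : a 2 = 2 * p := by rw [hp]; ring
  have em : a m = m * q := by rw [hq]; field_simp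
  have hp1 : p ≤ 1 := by
    have := Q 1 (-1) 0 0 (by intro t y C h1 h2 _ _ _ _; nlinarith)
    linarith
  have hp2 : -1 ≤ p := by
    have := Q 1 1 0 0 (by intro t y C h1 h2 _ _ _ _; nlinarith)
    linarith
  have hq1 : q ≤ 1 := by
    have := Q 1 0 (-1) 0 (by intro t y C h1 h2 _ _ _ _; nlinarith)
    linarith
  have hq2 : -1 ≤ q := by
    have := Q 1 0 1 0 (by intro t y C h1 h2 _ _ _ _; nlinarith)
    linarith
  -- the four basic bounds
  have u1 : 2 * m * (p * q) - a (m + 1) ≤ m + 1 := by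
    have := Q (m + 1 + m / 2 * (p + q) ^ 2) (-(m * (p + q))) (-(m * (p + q))) 1 (by
      intro t y C h1 h2 h3 h4 _ _
      have : 0 ≤ m / 2 * ((t + y - (p + q)) ^ 2 + (1 - t ^ 2) + (1 - y ^ 2)) := by
        have := sq_nonneg (t + y - (p + q))
        apply mul_nonneg (by linarith); linarith
      linarith)
    linarith [mul_nonneg hm0.le (sq_nonneg (p - q))]
  have l1 : a (m + 1) - 2 * m * (p * q) ≤ m + 1 := by
    have := Q (m + 1 + m / 2 * (p - q) ^ 2) (-(m * (p - q))) (m * (p - q)) (-1) (by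
      intro t y C h1 h2 h3 h4 _ _
      have : 0 ≤ m / 2 * ((t - y - (p - q)) ^ 2 + (1 - t ^ 2) + (1 - y ^ 2)) := by
        have := sq_nonneg (t - y - (p - q))
        apply mul_nonneg (by linarith); linarith
      linarith)
    linarith [mul_nonneg hm0.le (sq_nonneg (p + q))]
  have u2 : 3 * m * (p * q) - a (m + 1) ≤ 2 * m - 1 := by
    have := Q (2 * m - 1 + 3 / 4 * m * (p + q) ^ 2) (-(3 / 2 * m * (p + q)))
      (-(3 / 2 * m * (p + q))) 1 (by
      intro t y C h1 h2 h3 h4 h5 _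
      have k1 := mul_nonneg hm0.le (sq_nonneg (t + y - (p + q)))
      have k2 := mul_nonneg hm0.le (sq_nonneg (t - y))
      linarith)
    linarith [mul_nonneg hm0.le (sq_nonneg (p - q))]
  have l2 : a (m + 1) - 3 * m * (p * q) ≤ 2 * m - 1 := by
    have := Q (2 * m - 1 + 3 / 4 * m * (p - q) ^ 2) (-(3 / 2 * m * (p - q)))
      (3 / 2 * m * (p - q)) (-1) (by
      intro t y C h1 h2 h3 h4 _ h6
      have k1 := mul_nonneg hm0.le (sq_nonneg (t - y - (p - q)))
      linarith)
    linarith [mul_nonneg hm0.le (sq_nonneg (p + q))]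
  have hpq : |p * q| ≤ 1 := by
    rw [abs_mul]
    exact mul_le_one₀ (abs_le.2 ⟨hp2, hp1⟩) (abs_nonneg _) (abs_le.2 ⟨hq2, hq1⟩)
  obtain ⟨hpq1, hpq2⟩ := abs_le.1 hpq
  rw [e2, em]
  constructor
  · rintro ⟨-, h32⟩
    have w1 : 0 ≤ 3 - 2 * lam := by linarith
    have w2 : 0 ≤ 2 * lam - 2 := by linarith
    rw [abs_le]
    constructor
    · linarith [mul_le_mul_of_nonneg_left l1 w1, mul_le_mul_of_nonneg_left l2 w2]
    · linarith [mul_le_mul_of_nonneg_left u1 w1, mul_le_mul_of_nonneg_left u2 w2]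
  · intro h32
    have w : 0 ≤ (2 * lam - 3) * m := mul_nonneg (by linarith) hm0.le
    rw [abs_le]
    constructor
    · linarith [mul_le_mul_of_nonneg_left hpq1 w]
    · linarith [mul_le_mul_of_nonneg_left hpq2 w]
end

section
/- Let f(z) = z + Σ_{n≥2} a_n zⁿ be a typically real function on the open unit disc 𝔻 and let λ ≥ 1 be a real number. For all integers n, m ≥ 2, except in the cases where (n = 2 and m is even) or (m = 2 and n is even), one has |λ a_n a_m − a_{n+m−1}| ≤ λnm − n − m + 1. -/
open Real Set Filter Topology MeasureTheory

/-- Livingston-type inequality for a probability density `w` on `[0, π]`. -/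
lemma ztr_liv (w : ℝ → ℝ) (hw : Continuous w) (hpos : ∀ θ ∈ Icc 0 π, 0 ≤ w θ)
    (h1 : ∫ θ in (0:ℝ)..π, w θ = 1) (c : ℝ → ℝ)
    (hc : ∀ x, c x = ∫ θ in (0:ℝ)..π, cos (x * θ) * w θ) (x y : ℝ) :
    |2 * c x * c y - c (x + y)| ≤ 1 := by
  have key : ∀ A B C D : ℝ,
      (∀ θ, 0 ≤ A + B * cos (x * θ) + C * cos (y * θ) + D * cos ((x + y) * θ)) →
      0 ≤ A + B * c x + C * c y + D * c (x + y) := by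
    intro A B C D h
    have hint : ∀ z : ℝ, IntervalIntegrable (fun θ => cos (z * θ) * w θ) volume 0 π :=
      fun z => (by fun_prop : Continuous _).intervalIntegrable _ _
    have h0 : IntervalIntegrable w volume 0 π := hw.intervalIntegrable _ _
    have e : A + B * c x + C * c y + D * c (x + y) =
        ∫ θ in (0:ℝ)..π, (A * w θ + B * (cos (x * θ) * w θ) + C * (cos (y * θ) * w θ)
          + D * (cos ((x + y) * θ) * w θ)) := by
      rw [intervalIntegral.integral_add (((h0.const_mul A).add ((hint x).const_mul B)).add
          ((hint y).const_mul C)) ((hint (x + y)).const_mul D),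
        intervalIntegral.integral_add ((h0.const_mul A).add ((hint x).const_mul B))
          ((hint y).const_mul C),
        intervalIntegral.integral_add (h0.const_mul A) ((hint x).const_mul B)]
      simp only [intervalIntegral.integral_const_mul]
      rw [h1, ← hc, ← hc, ← hc]; ring
    rw [e]
    apply intervalIntegral.integral_nonneg pi_pos.le
    intro θ hθ
    have := mul_nonneg (h θ) (hpos θ hθ)
    linarith
  have k1 := key (2 + 2 * c x ^ 2 + 2 * c y ^ 2) (2 * (c y - c x)) (2 * (c x - c y)) (-2) (by
    intro θ
    rw [add_mul, cos_add]
    nlinarith [sq_nonneg (cos (x * θ) - c x - (cos (y * θ) - c y)), sq_nonneg (c x + c y),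
      sq_nonneg (sin (x * θ) + sin (y * θ)), sin_sq_add_cos_sq (x * θ),
      sin_sq_add_cos_sq (y * θ)])
  have k2 := key (2 + 2 * c x ^ 2 + 2 * c y ^ 2) (-2 * (c y + c x)) (-2 * (c x + c y)) 2 (by
    intro θ
    rw [add_mul, cos_add]
    nlinarith [sq_nonneg (cos (x * θ) - c x + (cos (y * θ) - c y)), sq_nonneg (c x - c y),
      sq_nonneg (sin (x * θ) - sin (y * θ)), sin_sq_add_cos_sq (x * θ),
      sin_sq_add_cos_sq (y * θ)])
  rw [abs_le]
  constructor <;> nlinarith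

/-- The combinatorial part. -/
lemma ztr_comb (c : ℝ → ℝ) (S : ℕ → ℝ) (hc0 : c 0 = 1) (hev : ∀ x, c (-x) = c x)
    (hliv : ∀ x y, |2 * c x * c y - c (x + y)| ≤ 1)
    (hS0 : S 0 = 1) (hS1 : S 1 = 2 * c 1) (hS : ∀ k : ℕ, S (k + 2) = S k + 2 * c (k + 2)) :
    (∀ p, |S p| ≤ p + 1) ∧
    ∀ p q : ℕ, 1 ≤ p → 1 ≤ q → ¬ ((p = 1 ∧ Odd q) ∨ (q = 1 ∧ Odd p)) →
      |S p * S q - S (p + q)| ≤ p * q := by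
  have hc1 : ∀ x, |c x| ≤ 1 := by
    intro x
    have := hliv x 0
    rw [hc0, add_zero] at this
    convert this using 2; ring
  have hSb : ∀ p, |S p| ≤ p + 1 := by
    intro p
    induction p using Nat.twoStepInduction with
    | zero => simp [hS0]
    | one => rw [hS1, abs_mul]; have := hc1 1; norm_num; linarith
    | more k h _ =>
      rw [hS]
      have := hc1 (k + 2)
      rw [abs_le] at *
      push_cast
      constructor <;> linarith
  refine ⟨hSb, ?_⟩
  have step : ∀ p q : ℕ, 1 ≤ q → |S p * S q - S (p + q)| ≤ p * q →
      |S (p + 2) * S q - S (p + 2 + q)| ≤ (p + 2 : ℕ) * q := by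
    intro p q hq h
    have e : S (p + 2 + q) = S (p + q) + 2 * c (p + 2 + q) := by
      rw [show p + 2 + q = (p + q) + 2 by ring, hS]; push_cast; ring_nf
    have hl := hliv (p + 2) q
    have hcp := hc1 (p + 2)
    have hT : ∃ T : ℝ, S q = T + 2 * c q ∧ |T| ≤ q - 1 := by
      match q, hq with
      | 1, _ => exact ⟨0, by simp [hS1], by simp⟩
      | (k + 2), _ =>
        refine ⟨S k, by rw [hS]; push_cast; ring, ?_⟩
        have := hSb k
        push_cast; linarith
    obtain ⟨T, hT1, hT2⟩ := hT
    have hm : |c (p + 2) * T| ≤ q - 1 := by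
      rw [abs_mul]
      nlinarith [abs_nonneg T, abs_nonneg (c (p + 2))]
    have e2 : S (p + 2) * S q - S (p + 2 + q) = (S p * S q - S (p + q))
        + 2 * (2 * c (p + 2) * c q - c (p + 2 + q)) + 2 * (c (p + 2) * T) := by
      rw [e, hS, hT1]; ring
    rw [e2]
    rw [abs_le] at *
    push_cast
    constructor <;> nlinarith
  have steps : ∀ p₀ q : ℕ, 1 ≤ q → |S p₀ * S q - S (p₀ + q)| ≤ p₀ * q → ∀ k : ℕ,
      |S (p₀ + 2 * k) * S q - S (p₀ + 2 * k + q)| ≤ (p₀ + 2 * k : ℕ) * q := by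
    intro p₀ q hq h k
    induction k with
    | zero => simpa using h
    | succ k ih => exact step (p₀ + 2 * k) q hq ih
  have symm : ∀ p q : ℕ, |S p * S q - S (p + q)| ≤ p * q →
      |S q * S p - S (q + p)| ≤ q * p := by
    intro p q h
    rwa [mul_comm (S q), add_comm q, mul_comm (q : ℝ)]
  have even : ∀ p q : ℕ, 1 ≤ q → Even p → |S p * S q - S (p + q)| ≤ p * q := by
    rintro p q hq ⟨k, rfl⟩
    have := steps 0 q hq (by simp [hS0]) k
    simpa [two_mul] using this
  have h33 : |S 3 * S 3 - S (3 + 3)| ≤ (3 : ℕ) * (3 : ℕ) := by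
    have l0 := hc1 1
    have l1 := hliv 3 (-1)
    have l2 := hliv 3 1
    have l3 := hliv 3 3
    rw [hev] at l1
    have h3 : S 3 = 2 * c 1 + 2 * c 3 := by
      rw [hS 1, hS1]; norm_num
    have h6 : S (3 + 3) = 1 + 2 * c 2 + 2 * c 4 + 2 * c 6 := by
      show S 6 = _
      rw [hS 4, hS 2, hS 0, hS0]; norm_num
    rw [h3, h6]
    norm_num at l1 l2 l3
    have l4 : c 1 ^ 2 ≤ 1 := (sq_le_one_iff_abs_le_one _).mpr l0
    have l5 := sq_nonneg (c 1)
    rw [abs_le] at l1 l2 l3 ⊢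
    obtain ⟨l1a, l1b⟩ := l1
    obtain ⟨l2a, l2b⟩ := l2
    obtain ⟨l3a, l3b⟩ := l3
    push_cast
    constructor <;> linarith
  intro p q hp hq hex
  rcases Nat.even_or_odd p with h | h
  · exact even p q hq h
  rcases Nat.even_or_odd q with h' | h'
  · exact symm _ _ (even q p hp h')
  have hp3 : p ≠ 1 := fun e => hex (Or.inl ⟨e, h'⟩)
  have hq3 : q ≠ 1 := fun e => hex (Or.inr ⟨e, h⟩)
  obtain ⟨i, rfl⟩ : ∃ i, p = 3 + 2 * i := by
    obtain ⟨j, rfl⟩ := h; exact ⟨j - 1, by omega⟩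
  obtain ⟨j, rfl⟩ : ∃ j, q = 3 + 2 * j := by
    obtain ⟨j, rfl⟩ := h'; exact ⟨j - 1, by omega⟩
  exact steps 3 _ hq (symm _ _ (steps 3 3 (by norm_num) h33 j)) i

lemma ztr_cos_int (k : ℤ) (hk : k ≠ 0) : ∫ θ in (0:ℝ)..π, cos (k * θ) = 0 := by
  have hk' : (k : ℝ) ≠ 0 := by exact_mod_cast hk
  rw [intervalIntegral.integral_comp_mul_left (fun x => cos x) hk']
  simp [sin_int_mul_pi]

lemma ztr_orth (j k : ℕ) (hk : k ≠ 0) :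
    ∫ θ in (0:ℝ)..π, sin (k * θ) * sin (j * θ) = if j = k then π / 2 else 0 := by
  have e : ∀ θ : ℝ, sin (k * θ) * sin (j * θ) =
      1 / 2 * cos (((k - j : ℤ) : ℝ) * θ) - 1 / 2 * cos (((k + j : ℤ) : ℝ) * θ) := by
    intro θ
    push_cast
    rw [sub_mul, add_mul, cos_sub, cos_add]; ring
  simp_rw [e]
  rw [intervalIntegral.integral_sub
    ((by fun_prop : Continuous _).intervalIntegrable _ _)
    ((by fun_prop : Continuous _).intervalIntegrable _ _),
    intervalIntegral.integral_const_mul, intervalIntegral.integral_const_mul,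
    ztr_cos_int (k + j) (by omega)]
  split_ifs with h
  · subst h; simp; ring
  · rw [ztr_cos_int (k - j) (by omega)]; simp

lemma ztr_main (f : ℂ → ℂ) (a : ℕ → ℝ) (ha1 : a 1 = 1)
    (hf : ∀ z ∈ Metric.ball (0 : ℂ) 1, HasSum (fun k => (a k : ℂ) * z ^ k) (f z))
    (htr : ∀ z ∈ Metric.ball (0 : ℂ) 1, ((f z).im = 0 ↔ z.im = 0))
    (r : ℝ) (hr0 : 0 < r) (hr1 : r < 1) :
    (∀ p : ℕ, |a (p + 1) * r ^ p| ≤ p + 1) ∧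
    ∀ p q : ℕ, 1 ≤ p → 1 ≤ q → ¬ ((p = 1 ∧ Odd q) ∨ (q = 1 ∧ Odd p)) →
      |a (p + 1) * r ^ p * (a (q + 1) * r ^ q) - a (p + q + 1) * r ^ (p + q)| ≤ p * q := by
  have hsum : Summable (fun k => |a k| * r ^ k) := by
    have h := (hf r (by simp [abs_of_pos hr0, hr1])).summable.norm
    refine h.congr fun k => ?_
    simp [abs_of_pos hr0]
  have hbd : ∀ (k : ℕ) (θ : ℝ), ‖a k * r ^ k * sin (k * θ)‖ ≤ |a k| * r ^ k := by
    intro k θ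
    rw [norm_mul, norm_mul, norm_pow, Real.norm_eq_abs, Real.norm_eq_abs, Real.norm_eq_abs,
      abs_of_pos hr0]
    exact mul_le_of_le_one_right (by positivity) (abs_sin_le_one _)
  set v : ℝ → ℝ := fun θ => ∑' k : ℕ, a k * r ^ k * sin (k * θ) with hv
  have hvc : Continuous v := continuous_tsum (fun k => by fun_prop) hsum hbd
  have hvs : ∀ θ, HasSum (fun k : ℕ => a k * r ^ k * sin (k * θ)) (v θ) := fun θ =>
    (Summable.of_norm_bounded hsum (fun k => hbd k θ)).hasSum
  have hvf : ∀ θ : ℝ, v θ = (f (r * Complex.exp (θ * Complex.I))).im := by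
    intro θ
    have h := hf (r * Complex.exp (θ * Complex.I)) (by
      simp [Complex.norm_exp_ofReal_mul_I, abs_of_pos hr0, hr1])
    have h2 := Complex.hasSum_im h
    refine (hvs θ).unique ?_
    convert h2 using 2 with k
    rw [mul_pow, ← Complex.exp_nat_mul,
      show (k : ℂ) * (θ * Complex.I) = ((k * θ : ℝ) : ℂ) * Complex.I by push_cast; ring,
      ← Complex.ofReal_pow, ← mul_assoc, ← Complex.ofReal_mul, Complex.im_ofReal_mul,
      Complex.exp_ofReal_mul_I_im]
  have hvne : ∀ θ ∈ Ioo 0 π, v θ ≠ 0 := by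
    intro θ hθ h
    rw [hvf, htr _ (by simp [Complex.norm_exp_ofReal_mul_I, abs_of_pos hr0, hr1]),
      Complex.im_ofReal_mul, Complex.exp_ofReal_mul_I_im] at h
    have := sin_pos_of_mem_Ioo hθ
    have := mul_pos hr0 this
    linarith
  have hcoef : ∀ k : ℕ, k ≠ 0 → ∫ θ in (0:ℝ)..π, sin (k * θ) * v θ = π / 2 * (a k * r ^ k) := by
    intro k hk
    have h := intervalIntegral.hasSum_integral_of_dominated_convergence
      (μ := volume) (a := 0) (b := π)
      (F := fun j : ℕ => fun θ => sin (k * θ) * (a j * r ^ j * sin (j * θ)))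
      (f := fun θ => sin (k * θ) * v θ) (fun j _ => |a j| * r ^ j)
      (fun j => (by fun_prop : Continuous _).aestronglyMeasurable)
      (fun j => Eventually.of_forall fun θ _ => by
        rw [norm_mul]
        exact (mul_le_of_le_one_left (norm_nonneg _) (abs_sin_le_one _)).trans (hbd j θ))
      (Eventually.of_forall fun θ _ => hsum)
      (by simp)
      (Eventually.of_forall fun θ _ => (hvs θ).mul_left _)
    refine h.unique ?_
    have e : ∀ j : ℕ, ∫ θ in (0:ℝ)..π, sin (k * θ) * (a j * r ^ j * sin (j * θ)) =
        if j = k then π / 2 * (a k * r ^ k) else 0 := by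
      intro j
      have : ∀ θ : ℝ, sin (k * θ) * (a j * r ^ j * sin (j * θ)) =
        a j * r ^ j * (sin (k * θ) * sin (j * θ)) := fun θ => by ring
      simp_rw [this]
      rw [intervalIntegral.integral_const_mul, ztr_orth j k hk]
      split_ifs with h
      · subst h; ring
      · simp
    simp_rw [e]
    exact hasSum_ite_eq k _
  have hI1 : ∫ θ in (0:ℝ)..π, sin θ * v θ = π / 2 * r := by
    have := hcoef 1 one_ne_zero
    simpa [ha1] using this
  have hvpos : ∀ θ ∈ Ioo 0 π, 0 < v θ := by
    by_contra! hcon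
    obtain ⟨θ₀, h0, hle⟩ := hcon
    have hneg : ∀ θ ∈ Ioo 0 π, v θ ≤ 0 := by
      intro θ hθ
      by_contra! hp
      obtain ⟨t, ht, ht0⟩ := (isPreconnected_Ioo).intermediate_value h0 hθ
        hvc.continuousOn ⟨hle, hp.le⟩
      exact hvne t ht ht0
    have : 0 ≤ ∫ θ in (0:ℝ)..π, -(sin θ * v θ) := by
      apply intervalIntegral.integral_nonneg pi_pos.le
      intro θ hθ
      rcases eq_or_lt_of_le hθ.1 with h | h
      · simp [← h]
      rcases eq_or_lt_of_le hθ.2 with h' | h'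
      · simp [h']
      have := hneg θ ⟨h, h'⟩
      have := sin_pos_of_mem_Ioo ⟨h, h'⟩
      nlinarith
    rw [intervalIntegral.integral_neg, hI1] at this
    have := mul_pos pi_pos hr0
    linarith
  set w : ℝ → ℝ := fun θ => 2 / (π * r) * (sin θ * v θ) with hw
  have hwc : Continuous w := by fun_prop
  have hwpos : ∀ θ ∈ Icc 0 π, 0 ≤ w θ := by
    intro θ hθ
    rcases eq_or_lt_of_le hθ.1 with h | h
    · simp [hw, ← h]
    rcases eq_or_lt_of_le hθ.2 with h' | h'
    · simp [hw, h']
    have := hvpos θ ⟨h, h'⟩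
    have := sin_pos_of_mem_Ioo ⟨h, h'⟩
    have := pi_pos
    positivity
  have hw1 : ∫ θ in (0:ℝ)..π, w θ = 1 := by
    rw [hw, intervalIntegral.integral_const_mul, hI1]
    have := pi_pos
    field_simp
  set c : ℝ → ℝ := fun x => ∫ θ in (0:ℝ)..π, cos (x * θ) * w θ with hc
  have hliv := ztr_liv w hwc hwpos hw1 c (fun x => rfl)
  have hdiff : ∀ k : ℕ, a (k + 2) * r ^ (k + 1) =
      (2 / (π * r)) * (∫ θ in (0:ℝ)..π, sin (k * θ) * v θ) + 2 * c (k + 1) := by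
    intro k
    have h := hcoef (k + 2) (by omega)
    have e : ∫ θ in (0:ℝ)..π, sin ((k + 2 : ℕ) * θ) * v θ =
        (∫ θ in (0:ℝ)..π, sin (k * θ) * v θ) + (π * r) * c (k + 1) := by
      rw [hc, ← intervalIntegral.integral_const_mul, ← intervalIntegral.integral_add
        ((by fun_prop : Continuous _).intervalIntegrable _ _)
        ((by fun_prop : Continuous _).intervalIntegrable _ _)]
      congr 1
      funext θ
      have := pi_pos
      have e1 : sin ((k + 2 : ℕ) * θ) = sin (k * θ) + 2 * cos ((k + 1) * θ) * sin θ := by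
        rw [show ((k + 2 : ℕ) : ℝ) * θ = (k + 1) * θ + θ by push_cast; ring,
          show (k : ℝ) * θ = (k + 1) * θ - θ by ring, sin_add, sin_sub]; ring
      rw [e1, hw]
      field_simp
    rw [e] at h
    have := pi_pos
    generalize (∫ θ in (0:ℝ)..π, sin (k * θ) * v θ) = X at *
    have hX : X = π / 2 * (a (k + 2) * r ^ (k + 2)) - (π * r) * c (k + 1) := by linarith
    rw [hX]
    field_simp
    ring
  have := ztr_comb c (fun p => a (p + 1) * r ^ p) (by simp [hc, hw1])
    (fun x => by simp [hc]) hliv (by simp [ha1])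
    (by have := hdiff 0; simpa using this)
    (fun k => by
      have h := hdiff (k + 1)
      rw [hcoef (k + 1) (by omega)] at h
      have := pi_pos
      show a (k + 2 + 1) * r ^ (k + 2) = a (k + 1) * r ^ k + 2 * c (k + 2)
      rw [show k + 2 + 1 = k + 1 + 2 by ring, show k + 2 = k + 1 + 1 by ring, h]
      push_cast
      rw [show (k : ℝ) + 1 + 1 = k + 2 by ring]
      field_simp
      ring)
  exact this

theorem zalcman_typically_real_general
    (f : ℂ → ℂ) (a : ℕ → ℝ)
    (ha0 : a 0 = 0) (ha1 : a 1 = 1)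
    (hf : ∀ z ∈ Metric.ball (0 : ℂ) 1, HasSum (fun k => (a k : ℂ) * z ^ k) (f z))
    (htr : ∀ z ∈ Metric.ball (0 : ℂ) 1, ((f z).im = 0 ↔ z.im = 0))
    (lam : ℝ) (hlam : 1 ≤ lam) (n m : ℕ) (hn : 2 ≤ n) (hm : 2 ≤ m)
    (hexc : ¬((n = 2 ∧ Even m) ∨ (m = 2 ∧ Even n))) :
    |lam * a n * a m - a (n + m - 1)| ≤ lam * n * m - n - m + 1 := by
  have lim : ∀ (F : ℝ → ℝ) (C : ℝ), Continuous F → (∀ r, 0 < r → r < 1 → F r ≤ C) → F 1 ≤ C := by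
    intro F C hF h
    have ht : Tendsto F (𝓝[<] 1) (𝓝 (F 1)) := hF.continuousAt.tendsto.mono_left nhdsWithin_le_nhds
    refine le_of_tendsto ht ?_
    filter_upwards [Ioo_mem_nhdsLT (show (0:ℝ) < 1 by norm_num)] with r hr
    exact h r hr.1 hr.2
  have hb : ∀ p : ℕ, |a (p + 1)| ≤ p + 1 := by
    intro p
    have := lim (fun r => |a (p + 1) * r ^ p|) (p + 1) (by fun_prop)
      (fun r h0 h1 => (ztr_main f a ha1 hf htr r h0 h1).1 p)
    simpa using this
  obtain ⟨p, rfl⟩ : ∃ p, n = p + 1 := ⟨n - 1, by omega⟩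
  obtain ⟨q, rfl⟩ : ∃ q, m = q + 1 := ⟨m - 1, by omega⟩
  have hz : |a (p + 1) * a (q + 1) - a (p + q + 1)| ≤ p * q := by
    have := lim (fun r => |a (p + 1) * r ^ p * (a (q + 1) * r ^ q) - a (p + q + 1) * r ^ (p + q)|)
      (p * q) (by fun_prop)
      (fun r h0 h1 => (ztr_main f a ha1 hf htr r h0 h1).2 p q (by omega) (by omega) (by
        rintro (⟨h, h'⟩ | ⟨h, h'⟩)
        · exact hexc (Or.inl ⟨by omega, h'.add_one⟩)
        · exact hexc (Or.inr ⟨by omega, h'.add_one⟩)))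
    simpa using this
  have hprod : |a (p + 1) * a (q + 1)| ≤ (p + 1) * (q + 1) := by
    rw [abs_mul]
    exact mul_le_mul (hb p) (hb q) (abs_nonneg _) (by positivity)
  rw [show p + 1 + (q + 1) - 1 = p + q + 1 by omega]
  push_cast
  rw [abs_le] at *
  constructor <;> nlinarith
end

section
/- Let f(z) = z + Σ_{n≥2} a_n zⁿ be analytic and injective on the open unit disc 𝔻 with all Taylor coefficients a_n real, and let λ ≥ 1 be a real number. Then |λ a_2² − a_3| ≤ 4λ − 3. -/
open Metric Set Filter Topology MeasureTheory

lemma ps_diff (c : ℕ → ℂ) (f : ℂ → ℂ)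
    (hf : ∀ z ∈ ball (0 : ℂ) 1, HasSum (fun k => c k * z ^ k) (f z)) :
    DifferentiableOn ℂ f (ball 0 1) := by
  have h : HasFPowerSeriesOnBall f (FormalMultilinearSeries.ofScalars ℂ c) 0 1 := by
    refine ⟨?_, by simp, ?_⟩
    · refine ENNReal.le_of_forall_nnreal_lt fun r hr => ?_
      have hr1 : (r : ℝ) < 1 := by exact_mod_cast hr
      refine FormalMultilinearSeries.le_radius_of_tendsto (l := 0) _ ?_
      have := (hf (r : ℂ) (by simpa using hr1)).summable.tendsto_atTop_zero.norm
      simpa [FormalMultilinearSeries.ofScalars_norm] using this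
    · intro y hy
      have hy' : y ∈ ball (0 : ℂ) 1 := by
        simpa [← ofReal_norm, Metric.eball, edist_zero_right] using hy
      simpa [FormalMultilinearSeries.ofScalars_apply_eq, mul_comm] using hf y hy'
  have := h.differentiableOn
  intro z hz
  refine (this z ?_).mono ?_
  · simpa [Metric.eball, ← ofReal_norm] using hz
  · intro w hw
    simpa [Metric.eball, ← ofReal_norm] using hw

lemma ps_shift (c : ℕ → ℂ) (f : ℂ → ℂ)
    (hf : ∀ z ∈ ball (0 : ℂ) 1, HasSum (fun k => c k * z ^ k) (f z)) :
    ∃ F : ℂ → ℂ, (∀ z ∈ ball (0 : ℂ) 1, HasSum (fun k => c (k+1) * z ^ k) (F z)) ∧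
      ∀ z ∈ ball (0 : ℂ) 1, f z = c 0 + z * F z := by
  have hs : ∀ z ∈ ball (0 : ℂ) 1, Summable (fun k => c (k+1) * z ^ k) := by
    intro z hz
    by_cases h0 : z = 0
    · subst h0
      apply summable_of_ne_finset_zero (s := {0})
      intro b hb
      simp at hb
      simp [hb]
    · have := ((summable_nat_add_iff 1).2 (hf z hz).summable).mul_left z⁻¹
      refine this.congr fun k => ?_
      rw [pow_succ]; field_simp
  refine ⟨fun z => ∑' k, c (k+1) * z ^ k, fun z hz => (hs z hz).hasSum, fun z hz => ?_⟩
  have h1 := (hs z hz).hasSum.mul_left z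
  have h2 := (hasSum_nat_add_iff' 1).2 (hf z hz)
  have h3 : (fun i => z * (c (i + 1) * z ^ i)) = fun n => c (n + 1) * z ^ (n + 1) := by
    ext; ring
  rw [h3] at h1
  have := h1.unique h2
  simp at this
  rw [this]; ring

lemma exists_sqrt (e : ℂ → ℂ) (he : DifferentiableOn ℂ e (ball 0 1))
    (hne : ∀ z ∈ ball (0:ℂ) 1, e z ≠ 0) (h1 : e 0 = 1) :
    ∃ p : ℂ → ℂ, DifferentiableOn ℂ p (ball 0 1) ∧ p 0 = 1 ∧
      ∀ z ∈ ball (0:ℂ) 1, p z ^ 2 * e z = 1 := by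
  have hd : DifferentiableOn ℂ (fun z => deriv e z / e z) (ball 0 1) :=
    (he.deriv isOpen_ball).div he hne
  obtain ⟨L, hL⟩ := hd.isExactOn_ball
  have hL' : ∀ z ∈ ball (0:ℂ) 1, HasDerivAt L (deriv e z / e z) z := fun z hz => hL z hz
  have hcst : ∀ z ∈ ball (0:ℂ) 1, e z * Complex.exp (-(L z - L 0)) = 1 := by
    have hder : ∀ z ∈ ball (0:ℂ) 1, HasDerivAt (fun z => e z * Complex.exp (-(L z - L 0))) 0 z := by
      intro z hz
      have h2 := (he.differentiableAt (isOpen_ball.mem_nhds hz)).hasDerivAt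
      have h3 := h2.mul (((hL' z hz).sub_const (L 0)).neg.cexp)
      refine h3.congr_deriv ?_
      have := hne z hz
      have h4 : e z * (deriv e z / e z) = deriv e z := by field_simp
      linear_combination (-Complex.exp (-(L z - L 0))) * h4
    intro z hz
    have := (convex_ball (0:ℂ) 1).is_const_of_fderivWithin_eq_zero (𝕜 := ℂ)
      (f := fun z => e z * Complex.exp (-(L z - L 0)))
      (fun z hz => (hder z hz).differentiableAt.differentiableWithinAt)
      (fun z hz => by
        rw [fderivWithin_of_isOpen isOpen_ball hz]
        have := (hder z hz).hasFDerivAt.fderiv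
        rw [this]; ext; simp) hz (mem_ball_self one_pos)
    simpa [h1] using this
  refine ⟨fun z => Complex.exp (-(L z - L 0) / 2), ?_, by simp, fun z hz => ?_⟩
  · intro z hz
    have := (hL' z hz).differentiableAt
    exact DifferentiableAt.differentiableWithinAt (by fun_prop)
  · rw [← Complex.exp_nat_mul, mul_comm, ← hcst z hz]
    congr 2; push_cast; ring

lemma preconn_norm (J : Set ℝ) (hJ : IsPreconnected J) (h0 : ∀ r ∈ J, 0 < r) :
    IsPreconnected {z : ℂ | ‖z‖ ∈ J} := by
  have : {z : ℂ | ‖z‖ ∈ J} = (fun p : ℝ × ℝ => (p.1 : ℂ) * Complex.exp (p.2 * Complex.I)) ''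
      (J ×ˢ univ) := by
    ext z
    constructor
    · intro hz
      exact ⟨(‖z‖, z.arg), ⟨hz, trivial⟩, Complex.norm_mul_exp_arg_mul_I z⟩
    · rintro ⟨p, hp, rfl⟩
      have := h0 _ hp.1
      simpa [Complex.norm_exp_ofReal_mul_I, abs_of_pos this] using hp.1
  rw [this]
  refine (hJ.prod isPreconnected_univ).image _ ?_
  fun_prop

lemma topo_contain (G : ℂ → ℂ) (ε R : ℝ) (hε : 0 < ε) (hR : 0 < R)
    (hc : ContinuousOn G (ball 0 1 \ {0}))
    (hopen : ∀ U ⊆ ball (0:ℂ) 1 \ {0}, IsOpen U → IsOpen (G '' U))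
    (hinj : InjOn G (ball 0 1 \ {0}))
    (hinf : Tendsto (fun z => ‖G z‖) (𝓝[≠] 0) atTop)
    (hs : ∀ z : ℂ, ‖z‖ = ε → ‖G z‖ ≤ R) :
    ∀ z : ℂ, ε < ‖z‖ → ‖z‖ < 1 → ‖G z‖ ≤ R := by
  intro z hz1 hz2
  by_contra hcon
  push Not at hcon
  set U : Set ℂ := G '' (ball 0 ε \ {0})
  set K : Set ℂ := G '' (closedBall 0 ε \ {0})
  have hU : IsOpen U := hopen _ (by
    intro w hw; simp at hw ⊢; exact ⟨by linarith [hw.1], hw.2⟩) (isOpen_ball.sdiff isClosed_singleton)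
  have hbig : ∀ M : ℝ, ∃ η > 0, ∀ w : ℂ, w ≠ 0 → ‖w‖ < η → M < ‖G w‖ := by
    intro M
    have := (hinf.eventually_gt_atTop M)
    rw [eventually_nhdsWithin_iff, Metric.eventually_nhds_iff] at this
    obtain ⟨η, h1, h2⟩ := this
    exact ⟨η, h1, fun w hw hw' => h2 (by simpa using hw') hw⟩
  have hV : IsOpen Kᶜ := by
    rw [Metric.isOpen_iff]
    intro w hw
    obtain ⟨η, hη, hηG⟩ := hbig (‖w‖ + 1)
    have hcomp : IsCompact (G '' (closedBall 0 ε ∩ (ball 0 η)ᶜ)) := by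
      refine ((isCompact_closedBall _ _).inter_right isOpen_ball.isClosed_compl).image_of_continuousOn
        (hc.mono ?_)
      intro u hu
      simp at hu ⊢
      refine ⟨by linarith, ?_⟩
      rintro rfl
      simp at hu; linarith
    have hw2 : w ∈ (G '' (closedBall 0 ε ∩ (ball 0 η)ᶜ))ᶜ := by
      rintro ⟨u, hu, rfl⟩
      apply hw
      refine ⟨u, ⟨hu.1, ?_⟩, rfl⟩
      rintro rfl
      simp at hu; linarith
    obtain ⟨δ, hδ, hδs⟩ := Metric.isOpen_iff.1 hcomp.isClosed.isOpen_compl w hw2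
    refine ⟨min δ 1, by positivity, ?_⟩
    rintro v hv ⟨u, hu, rfl⟩
    have hv1 : G u ∈ ball w δ := ball_subset_ball (min_le_left _ _) hv
    have hv2 : G u ∈ ball w 1 := ball_subset_ball (min_le_right _ _) hv
    have hv3 : ‖G u‖ < ‖w‖ + 1 := by
      have : ‖G u - w‖ < 1 := by simpa [dist_eq_norm] using hv2
      have := norm_sub_norm_le (G u) w
      linarith
    by_cases hu2 : ‖u‖ < η
    · have := hηG u hu.2 hu2
      linarith
    · exact hδs hv1 ⟨u, ⟨hu.1, by simpa using hu2⟩, rfl⟩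
  have hΩ := preconn_norm (Ioi R) isPreconnected_Ioi (fun r hr => hR.trans hr)
  have hsub : {w : ℂ | ‖w‖ ∈ Ioi R} ⊆ U ∪ Kᶜ := by
    intro w hw
    by_cases hwK : w ∈ K
    · left
      obtain ⟨u, hu, rfl⟩ := hwK
      refine ⟨u, ⟨?_, hu.2⟩, rfl⟩
      have : ‖u‖ ≠ ε := fun h => absurd (hs u h) (not_le.2 hw)
      have h2 : ‖u‖ ≤ ε := by simpa using hu.1
      simpa using lt_of_le_of_ne h2 this
    · exact Or.inr hwK
  obtain ⟨η, hη, hηG⟩ := hbig R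
  have hne1 : ({w : ℂ | ‖w‖ ∈ Ioi R} ∩ U).Nonempty := by
    set t : ℝ := min η ε / 2
    have ht : 0 < t := by positivity
    have ht1 : t < η := by
      have : min η ε ≤ η := min_le_left _ _
      simp only [t] at *; linarith
    have ht2 : t < ε := by
      have : min η ε ≤ ε := min_le_right _ _
      simp only [t] at *; linarith
    have ht0 : (t : ℂ) ≠ 0 := by exact_mod_cast ht.ne'
    refine ⟨G t, hηG _ ht0 (by simpa [abs_of_pos ht] using ht1), ?_⟩
    exact ⟨t, ⟨by simpa [abs_of_pos ht] using ht2, ht0⟩, rfl⟩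
  have hne2 : ({w : ℂ | ‖w‖ ∈ Ioi R} ∩ Kᶜ).Nonempty := by
    refine ⟨G z, hcon, ?_⟩
    rintro ⟨u, hu, huz⟩
    have h1 : ‖u‖ ≤ ε := by simpa using hu.1
    have : u = z := hinj ⟨by simp; linarith, hu.2⟩ ⟨by simpa using hz2, by
      rintro rfl; simp at hz1; linarith⟩ huz
    subst this; linarith
  obtain ⟨w, -, hw1, hw2⟩ := hΩ U Kᶜ hU hV hsub hne1 hne2
  obtain ⟨u, hu, rfl⟩ := hw1
  exact hw2 ⟨u, ⟨ball_subset_closedBall hu.1, hu.2⟩, rfl⟩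

lemma circle_lower_real (b : ℂ) (v : ℂ → ℂ) (hv : DifferentiableOn ℂ v (ball 0 1))
    (r : ℝ) (hr : 0 < r) (hr1 : r < 1) :
    2 * Real.pi * ((r ^ 4)⁻¹ + ‖b‖ ^ 2) ≤ ∫ θ in (0:ℝ)..(2 * Real.pi),
      ‖-((circleMap 0 r θ) ^ 2)⁻¹ + b + circleMap 0 r θ * v (circleMap 0 r θ)‖ ^ 2 := by
  set Φ : ℂ → ℂ := fun z => -b * z ^ 2 / r ^ 4 + (-z ^ 2 / r ^ 4 + (starRingEnd ℂ) b) * (z * v z)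
    with hΦ
  have hmem : ∀ θ, circleMap 0 r θ ∈ ball (0:ℂ) 1 := by
    intro θ; simp [abs_of_pos hr, hr1]
  have hΦd : DifferentiableOn ℂ Φ (ball 0 1) := by
    rw [hΦ]
    fun_prop
  have hcb : closedBall (0:ℂ) r ⊆ ball 0 1 := closedBall_subset_ball hr1
  have hmean : ∫ θ in (0:ℝ)..(2 * Real.pi), Φ (circleMap 0 r θ) = 0 := by
    have h1 : DiffContOnCl ℂ Φ (ball 0 |r|) := by
      rw [abs_of_pos hr]
      apply DifferentiableOn.diffContOnCl
      rw [closure_ball _ hr.ne']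
      exact hΦd.mono hcb
    have := h1.circleAverage
    rw [Real.circleAverage_def] at this
    have h0 : Φ 0 = 0 := by simp [hΦ]
    rw [h0] at this
    simpa [Real.pi_ne_zero] using this
  have hcΦ : Continuous fun θ => Φ (circleMap 0 r θ) :=
    hΦd.continuousOn.comp_continuous (continuous_circleMap 0 r) hmem
  have hcv : Continuous fun θ => v (circleMap 0 r θ) :=
    hv.continuousOn.comp_continuous (continuous_circleMap 0 r) hmem
  have hcre : Continuous fun θ => (Φ (circleMap 0 r θ)).re := Complex.continuous_re.comp hcΦ
  have hmeanre : ∫ θ in (0:ℝ)..(2 * Real.pi), (Φ (circleMap 0 r θ)).re = 0 := by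
    have := Complex.reCLM.intervalIntegral_comp_comm (hcΦ.intervalIntegrable (μ := volume) 0 (2*Real.pi))
    simp only [Complex.reCLM_apply] at this
    rw [this, hmean]; simp
  have hcz : Continuous fun θ => circleMap 0 r θ := continuous_circleMap 0 r
  have hne : ∀ θ, circleMap 0 r θ ^ 2 ≠ 0 := by
    intro θ; apply pow_ne_zero; exact circleMap_ne_center hr.ne'
  have hpt : ∀ θ, ((r ^ 4)⁻¹ + ‖b‖ ^ 2) + 2 * (Φ (circleMap 0 r θ)).re ≤
      ‖-((circleMap 0 r θ) ^ 2)⁻¹ + b + circleMap 0 r θ * v (circleMap 0 r θ)‖ ^ 2 := by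
    intro θ
    have hz : ‖circleMap 0 r θ‖ = r := by simp [abs_of_pos hr]
    generalize circleMap 0 r θ = z at *
    generalize hw : z * v z = w
    simp only [hΦ, hw]
    have hinv : (z ^ 2)⁻¹ = (starRingEnd ℂ) (z^2) / r ^ 4 := by
      rw [Complex.inv_def, Complex.normSq_eq_norm_sq, norm_pow, hz]
      push_cast
      rw [div_eq_mul_inv]; ring
    rw [hinv]
    have hZ : Complex.normSq (z^2) = r^4 := by
      rw [Complex.normSq_eq_norm_sq, norm_pow, hz]; ring
    generalize z ^ 2 = Z at *
    have hr4 : (r:ℝ)^4 ≠ 0 := by positivity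
    have hk : ((r:ℂ)^4) = ((r^4 : ℝ) : ℂ) := by push_cast; rfl
    rw [hk]
    generalize r ^ 4 = s at *
    rw [← Complex.normSq_eq_norm_sq, ← Complex.normSq_eq_norm_sq]
    rw [div_eq_mul_inv, div_eq_mul_inv, div_eq_mul_inv, ← Complex.ofReal_inv]
    have hss : s⁻¹ = s⁻¹ * s⁻¹ * s := by field_simp
    have hq : s⁻¹ = s⁻¹ * s⁻¹ * (Z.re * Z.re + Z.im * Z.im) := by
      rw [← Complex.normSq_apply, hZ]; exact hss
    generalize s⁻¹ = q at *
    simp [Complex.normSq_apply]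
    nlinarith [sq_nonneg w.re, sq_nonneg w.im]
  have hI : IntervalIntegrable (fun θ => 2 * (Φ (circleMap 0 r θ)).re) volume 0 (2 * Real.pi) :=
    (continuous_const.mul hcre).intervalIntegrable _ _
  calc 2 * Real.pi * ((r ^ 4)⁻¹ + ‖b‖ ^ 2)
      = ∫ θ in (0:ℝ)..(2 * Real.pi), (((r ^ 4)⁻¹ + ‖b‖ ^ 2) + 2 * (Φ (circleMap 0 r θ)).re) := by
        rw [intervalIntegral.integral_add (by simp)
          hI, intervalIntegral.integral_const_mul, hmeanre]
        simp
        ring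
    _ ≤ _ := by
        apply intervalIntegral.integral_mono_on (by positivity)
        · exact Continuous.intervalIntegrable (continuous_const.add (continuous_const.mul hcre)) _ _
        · apply Continuous.intervalIntegrable
          have := hcz.pow 2 |>.inv₀ hne
          exact ((this.neg.add continuous_const).add (hcz.mul hcv)).norm.pow 2
        · exact fun θ _ => hpt θ

lemma circle_lower (b : ℂ) (v : ℂ → ℂ) (hv : DifferentiableOn ℂ v (ball 0 1))
    (r : ℝ) (hr : 0 < r) (hr1 : r < 1) :
    ENNReal.ofReal (2 * Real.pi * ((r ^ 4)⁻¹ + ‖b‖ ^ 2)) ≤ ∫⁻ θ in Ioo (-Real.pi) Real.pi,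
      ENNReal.ofReal (‖-((circleMap 0 r θ) ^ 2)⁻¹ + b + circleMap 0 r θ * v (circleMap 0 r θ)‖ ^ 2) := by
  have h := circle_lower_real b v hv r hr hr1
  set F : ℝ → ℝ := fun θ => ‖-((circleMap 0 r θ) ^ 2)⁻¹ + b + circleMap 0 r θ * v (circleMap 0 r θ)‖ ^ 2
    with hF
  have hmem : ∀ θ, circleMap 0 r θ ∈ ball (0:ℂ) 1 := by
    intro θ; simp [abs_of_pos hr, hr1]
  have hcv : Continuous fun θ => v (circleMap 0 r θ) :=
    hv.continuousOn.comp_continuous (continuous_circleMap 0 r) hmem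
  have hcz : Continuous fun θ => circleMap 0 r θ := continuous_circleMap 0 r
  have hne : ∀ θ, circleMap 0 r θ ^ 2 ≠ 0 := by
    intro θ; apply pow_ne_zero; exact circleMap_ne_center hr.ne'
  have hcF : Continuous F := by
    have := hcz.pow 2 |>.inv₀ hne
    exact ((this.neg.add continuous_const).add (hcz.mul hcv)).norm.pow 2
  have hper : Function.Periodic F (2 * Real.pi) := by
    intro θ; simp only [hF, periodic_circleMap 0 r θ]
  have h2 := hper.intervalIntegral_add_eq 0 (-Real.pi)
  have e1 : -Real.pi + 2 * Real.pi = Real.pi := by ring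
  rw [zero_add, e1] at h2
  rw [h2, intervalIntegral.integral_of_le (by linarith [Real.pi_pos]), integral_Ioc_eq_integral_Ioo] at h
  rw [← ofReal_integral_eq_lintegral_ofReal]
  · exact ENNReal.ofReal_le_ofReal h
  · exact (hcF.integrableOn_Icc (a := -Real.pi) (b := Real.pi)).mono_set Ioo_subset_Icc_self
  · exact Eventually.of_forall fun θ => by positivity

lemma annulus_lower (b : ℂ) (v : ℂ → ℂ) (hv : DifferentiableOn ℂ v (ball 0 1))
    (ε ρ : ℝ) (hε : 0 < ε) (hερ : ε < ρ) (hρ : ρ < 1) :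
    ENNReal.ofReal (Real.pi * ((ε^2)⁻¹ - (ρ^2)⁻¹ + ‖b‖ ^ 2 * (ρ^2 - ε^2))) ≤
      ∫⁻ z in {z : ℂ | ε < ‖z‖ ∧ ‖z‖ < ρ}, ENNReal.ofReal (‖-(z ^ 2)⁻¹ + b + z * v z‖ ^ 2) := by
  set A : Set ℂ := {z : ℂ | ε < ‖z‖ ∧ ‖z‖ < ρ}
  have hA : MeasurableSet A :=
    ((isOpen_lt continuous_const continuous_norm).inter
      (isOpen_lt continuous_norm continuous_const)).measurableSet
  rw [← lintegral_indicator hA, ← Complex.lintegral_comp_polarCoord_symm]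
  set F : ℂ → ENNReal := fun z => ENNReal.ofReal (‖-(z ^ 2)⁻¹ + b + z * v z‖ ^ 2) with hF
  have hsymm : ∀ p : ℝ × ℝ, Complex.polarCoord.symm p = circleMap 0 p.1 p.2 := by
    intro p
    rw [Complex.polarCoord_symm_apply, circleMap, Complex.exp_mul_I]
    simp
  set S : Set (ℝ × ℝ) := Ioo ε ρ ×ˢ Ioo (-Real.pi) Real.pi with hS
  have hSm : MeasurableSet S := measurableSet_Ioo.prod measurableSet_Ioo
  have hsub : S ⊆ polarCoord.target := by
    intro p hp
    exact ⟨hε.trans hp.1.1, hp.2⟩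
  refine le_trans ?_ (lintegral_mono_set hsub)
  have hcong : ∫⁻ p in S, ENNReal.ofReal p.1 • A.indicator F (Complex.polarCoord.symm p)
      = ∫⁻ p in S, ENNReal.ofReal p.1 * F (circleMap 0 p.1 p.2) := by
    refine setLIntegral_congr_fun hSm fun p hp => ?_
    have h0 : 0 < p.1 := hε.trans hp.1.1
    have : circleMap 0 p.1 p.2 ∈ A := by
      simp only [A, mem_ofPred_eq, norm_circleMap_zero, abs_of_pos h0]
      exact hp.1
    simp only [hsymm, indicator_of_mem this, smul_eq_mul]
  rw [hcong]
  have hcm : Continuous fun p : ℝ × ℝ => circleMap 0 p.1 p.2 := by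
    unfold circleMap; fun_prop
  have hcont : ContinuousOn (fun p : ℝ × ℝ => ENNReal.ofReal p.1 * F (circleMap 0 p.1 p.2)) S := by
    have h1 : ContinuousOn (fun p : ℝ × ℝ => v (circleMap 0 p.1 p.2)) S := by
      refine hv.continuousOn.comp hcm.continuousOn fun p hp => ?_
      have h0 : 0 < p.1 := hε.trans hp.1.1
      have h2 := hp.1.2
      simp [abs_of_pos h0]; linarith
    have h2 : ContinuousOn (fun p : ℝ × ℝ => ((circleMap 0 p.1 p.2)^2)⁻¹) S := by
      refine ContinuousOn.inv₀ (by fun_prop) fun p hp => ?_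
      exact pow_ne_zero _ (circleMap_ne_center (hε.trans hp.1.1).ne')
    have h3 : ContinuousOn (fun p : ℝ × ℝ => p.1 *
      (‖-((circleMap 0 p.1 p.2) ^ 2)⁻¹ + b + (circleMap 0 p.1 p.2) * v (circleMap 0 p.1 p.2)‖ ^ 2)) S :=
      continuousOn_fst.mul
        (((h2.neg.add continuousOn_const).add (hcm.continuousOn.mul h1)).norm.pow 2)
    refine (ENNReal.continuous_ofReal.comp_continuousOn h3).congr fun p hp => ?_
    have h0 : 0 < p.1 := hε.trans hp.1.1
    simp only [hF, Function.comp, ENNReal.ofReal_mul h0.le]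
  rw [hS, Measure.volume_eq_prod, ← Measure.prod_restrict, lintegral_prod]
  swap
  · rw [Measure.prod_restrict]
    exact hcont.aemeasurable hSm
  have hin : ∀ r ∈ Ioo ε ρ, ENNReal.ofReal (2 * Real.pi * ((r ^ 3)⁻¹ + ‖b‖ ^ 2 * r)) ≤
      ∫⁻ θ in Ioo (-Real.pi) Real.pi, ENNReal.ofReal r * F (circleMap 0 r θ) := by
    intro r hr
    have h0 : 0 < r := hε.trans hr.1
    rw [lintegral_const_mul' _ _ ENNReal.ofReal_ne_top]
    refine le_trans (le_of_eq ?_) (mul_le_mul_right (circle_lower b v hv r h0 (hr.2.trans hρ)) _)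
    rw [← ENNReal.ofReal_mul h0.le]
    congr 1
    field_simp
  refine le_trans ?_ (setLIntegral_mono' measurableSet_Ioo hin)
  have hcI : ContinuousOn (fun r : ℝ => 2 * Real.pi * ((r ^ 3)⁻¹ + ‖b‖ ^ 2 * r)) (Icc ε ρ) := by
    have : ContinuousOn (fun r : ℝ => (r^3)⁻¹) (Icc ε ρ) := ContinuousOn.inv₀ (by fun_prop)
      fun r hr => pow_ne_zero _ (hε.trans_le hr.1).ne'
    fun_prop
  rw [← ofReal_integral_eq_lintegral_ofReal]
  · apply le_of_eq
    congr 1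
    rw [← integral_Ioc_eq_integral_Ioo, ← intervalIntegral.integral_of_le hερ.le]
    rw [intervalIntegral.integral_eq_sub_of_hasDerivAt
      (f := fun r => Real.pi * (-(r^2)⁻¹ + ‖b‖^2 * r^2))]
    · ring
    · intro r hr
      rw [uIcc_of_le hερ.le] at hr
      have h0 : r ≠ 0 := (hε.trans_le hr.1).ne'
      have h1 := ((((hasDerivAt_pow 2 r).inv (pow_ne_zero 2 h0)).neg).add
        ((hasDerivAt_pow 2 r).const_mul (‖b‖^2))).const_mul Real.pi
      refine h1.congr_deriv ?_
      field_simp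
      push_cast
      ring
    · apply ContinuousOn.intervalIntegrable
      rwa [uIcc_of_le hερ.le]
  · exact hcI.integrableOn_Icc.mono_set Ioo_subset_Icc_self
  · refine (ae_restrict_iff' measurableSet_Ioo).2 (Eventually.of_forall fun r hr => ?_)
    have h0 : 0 < r := hε.trans hr.1
    simp only [Pi.zero_apply]
    positivity

lemma det_T (β : ℂ) : LinearMap.det ((LinearMap.id : ℂ →ₗ[ℝ] ℂ) +
    (LinearMap.mulLeft ℝ β) ∘ₗ Complex.conjAe.toLinearMap) = 1 - ‖β‖ ^ 2 := by
  rw [← LinearMap.det_toMatrix Complex.basisOneI, Matrix.det_fin_two, ← Complex.normSq_eq_norm_sq,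
    Complex.normSq_apply]
  simp [LinearMap.toMatrix_apply, Complex.basisOneI]
  ring

lemma area_ineq (b : ℂ) (k g : ℂ → ℂ) (hk : DifferentiableOn ℂ k (ball 0 1))
    (hg : ∀ z, g z = z⁻¹ + (b * z + z ^ 2 * k z)) (hinj : InjOn g (ball 0 1 \ {0}))
    (C ε ρ : ℝ) (hC : 0 ≤ C) (hε : 0 < ε) (hερ : ε < ρ) (hρ : ρ < 1)
    (hb : ‖b‖ * ε ^ 2 ≤ 1 / 2) (hkC : ∀ z : ℂ, ‖z‖ = ε → ‖k z‖ ≤ C) :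
    (ε ^ 2)⁻¹ - (ρ ^ 2)⁻¹ + ‖b‖ ^ 2 * (ρ ^ 2 - ε ^ 2) ≤ (ε⁻¹ + 2 * C * ε ^ 2) ^ 2 := by
  set R : ℝ := ε⁻¹ + 2 * C * ε ^ 2 with hR
  have hRpos : 0 < R := by positivity
  set β : ℂ := b * (ε : ℂ) ^ 2 with hβ
  have hβn : ‖β‖ ≤ 1 / 2 := by
    rw [hβ, norm_mul, norm_pow, Complex.norm_real, Real.norm_of_nonneg hε.le]; exact hb
  have hβ0 := norm_nonneg β
  set d : ℝ := 1 - ‖β‖ ^ 2 with hd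
  have hdpos : 0 < d := by rw [hd]; nlinarith
  have hββ : β * (starRingEnd ℂ) β = ((‖β‖ ^ 2 : ℝ) : ℂ) := by
    rw [Complex.mul_conj, Complex.normSq_eq_norm_sq]
  set T : ℂ → ℂ := fun w => w + β * (starRingEnd ℂ) w with hT
  set S : ℂ → ℂ := fun w => ((d⁻¹ : ℝ) : ℂ) * (w - β * (starRingEnd ℂ) w) with hS
  have hdc : ((d⁻¹ : ℝ) : ℂ) * (1 - β * (starRingEnd ℂ) β) = 1 := by
    rw [hββ, ← Complex.ofReal_one, ← Complex.ofReal_sub, ← Complex.ofReal_mul]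
    rw [← hd, inv_mul_cancel₀ hdpos.ne']
  have hST : ∀ w, S (T w) = w := by
    intro w
    simp only [hS, hT, map_add, map_mul, Complex.conj_conj]
    linear_combination w * hdc
  have hTS : ∀ w, T (S w) = w := by
    intro w
    simp only [hS, hT, map_sub, map_mul, Complex.conj_conj, Complex.conj_ofReal]
    linear_combination w * hdc
  have hSn : ∀ w, ‖S w‖ ≤ 2 * ‖w‖ := by
    intro w
    have h1 : ‖w - β * (starRingEnd ℂ) w‖ ≤ (1 + ‖β‖) * ‖w‖ := by
      refine (norm_sub_le _ _).trans ?_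
      rw [norm_mul, Complex.norm_conj]; linarith
    simp only [hS]
    rw [norm_mul, Complex.norm_real, Real.norm_of_nonneg (by positivity), inv_mul_le_iff₀ hdpos]
    refine h1.trans ?_
    have h2 : 1 + ‖β‖ ≤ d * 2 := by rw [hd]; nlinarith
    nlinarith [norm_nonneg w]
  have hTn : ∀ w, ‖T w‖ ≤ 2 * ‖w‖ := by
    intro w
    simp only [hT]
    refine (norm_add_le _ _).trans ?_
    rw [norm_mul, Complex.norm_conj]
    nlinarith [norm_nonneg w]
  have hSadd : ∀ u w, S (u + w) = S u + S w := by
    intro u w; simp only [hS, map_add]; ring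
  have hTc : Continuous T := by
    simp only [hT]
    exact continuous_id.add (continuous_const.mul Complex.continuous_conj)
  have hSc : Continuous S := by
    simp only [hS]
    exact continuous_const.mul (continuous_id.sub (continuous_const.mul Complex.continuous_conj))
  -- derivative of g
  set D : Set ℂ := ball (0:ℂ) 1 \ {0} with hD
  have hDo : IsOpen D := isOpen_ball.sdiff isClosed_singleton
  set v : ℂ → ℂ := fun z => 2 * k z + z * deriv k z with hv
  have hvd : DifferentiableOn ℂ v (ball 0 1) := by
    have := hk.deriv isOpen_ball
    simp only [hv]
    fun_prop
  have hgd : ∀ z ∈ D, HasDerivAt g (-(z ^ 2)⁻¹ + b + z * v z) z := by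
    intro z hz
    have hkz := (hk.differentiableAt (isOpen_ball.mem_nhds hz.1)).hasDerivAt
    have h1 := (hasDerivAt_inv hz.2).add (((hasDerivAt_id z).const_mul b).add
      ((hasDerivAt_pow 2 z).mul hkz))
    have h2 : g = (fun z => z⁻¹) + ((fun z => b * id z) + ((fun z => z ^ 2) * k)) := by
      ext z; simp [hg]
    rw [h2]
    refine h1.congr_deriv ?_
    simp [hv]
    ring
  have hgdo : DifferentiableOn ℂ g D := fun z hz =>
    (hgd z hz).differentiableAt.differentiableWithinAt
  have hDpre : IsPreconnected D := by
    have := preconn_norm (Ioo 0 1) isPreconnected_Ioo (fun r hr => hr.1)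
    convert this using 1
    ext z
    simp [hD, and_comm]
  have hgopen : ∀ U ⊆ D, IsOpen U → IsOpen (g '' U) := by
    refine ((hgdo.analyticOnNhd hDo).is_constant_or_isOpen hDpre).resolve_left ?_
    rintro ⟨w, hw⟩
    have h1 : (1/2 : ℂ) ∈ D := by simp [hD]; norm_num
    have h2 : (1/3 : ℂ) ∈ D := by simp [hD]; norm_num
    have := hinj h1 h2 ((hw _ h1).trans (hw _ h2).symm)
    norm_num at this
  have hginf : Tendsto (fun z => ‖g z‖) (𝓝[≠] 0) atTop := by
    have h1 : Tendsto (fun z : ℂ => ‖z⁻¹‖) (𝓝[≠] 0) atTop :=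
      tendsto_norm_cobounded_atTop.comp tendsto_inv₀_nhdsNE_zero
    have h2 : Tendsto (fun z : ℂ => -‖b * z + z ^ 2 * k z‖) (𝓝[≠] 0)
        (𝓝 (-‖b * 0 + 0 ^ 2 * k 0‖)) := by
      have : ContinuousAt k 0 := (hk.differentiableAt (ball_mem_nhds 0 one_pos)).continuousAt
      have h3 : ContinuousAt (fun z : ℂ => -‖b * z + z ^ 2 * k z‖) 0 := by fun_prop
      exact h3.tendsto.mono_left nhdsWithin_le_nhds
    refine tendsto_atTop_mono (fun z => ?_) (h1.atTop_add h2)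
    rw [hg z]
    have := norm_sub_le (z⁻¹ + (b * z + z ^ 2 * k z)) (b * z + z ^ 2 * k z)
    simp only [add_sub_cancel_right] at this
    linarith
  have hcontain := topo_contain (fun z => S (g z)) ε R hε hRpos
    (hSc.comp_continuousOn hgdo.continuousOn)
    (by
      intro U hU hUo
      have : (fun z => S (g z)) '' U = T ⁻¹' (g '' U) := by
        ext w
        constructor
        · rintro ⟨u, hu, rfl⟩
          exact ⟨u, hu, (hTS _).symm⟩
        · rintro ⟨u, hu, huw⟩
          exact ⟨u, hu, by simp only [huw, hST]⟩
      rw [this]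
      exact (hgopen U hU hUo).preimage hTc)
    (by
      intro x hx y hy hxy
      apply hinj hx hy
      have := congrArg T hxy
      simpa only [hTS] using this)
    (by
      have := hginf.const_mul_atTop (r := 1/2) (by norm_num)
      refine tendsto_atTop_mono (fun z => ?_) this
      have := hTn (S (g z))
      rw [hTS] at this
      linarith)
    (by
      intro z hz
      have hz0 : z ≠ 0 := by rintro rfl; simp at hz; linarith
      have h1 : g z = T z⁻¹ + z ^ 2 * k z := by
        rw [hg z]
        have : β * (starRingEnd ℂ) z⁻¹ = b * z := by
          have h3 : z * (starRingEnd ℂ) z = (ε:ℂ) ^ 2 := by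
            rw [Complex.mul_conj, Complex.normSq_eq_norm_sq, hz]; push_cast; rfl
          have h4 : (starRingEnd ℂ) z ≠ 0 := by simpa using hz0
          rw [hβ, ← h3, map_inv₀]
          field_simp
        simp only [hT]
        rw [this]; ring
      simp only [h1, hSadd, hST]
      refine (norm_add_le _ _).trans ?_
      have h5 := hSn (z ^ 2 * k z)
      have hn : ‖z ^ 2 * k z‖ = ε ^ 2 * ‖k z‖ := by rw [norm_mul, norm_pow, hz]
      rw [hn] at h5
      rw [norm_inv, hz, hR]
      have h6 := hkC z hz
      have : ε ^ 2 * ‖k z‖ ≤ ε ^ 2 * C := by gcongr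
      linarith)
  set A : Set ℂ := {z : ℂ | ε < ‖z‖ ∧ ‖z‖ < ρ} with hA
  have hAm : MeasurableSet A :=
    ((isOpen_lt continuous_const continuous_norm).inter
      (isOpen_lt continuous_norm continuous_const)).measurableSet
  have hAD : A ⊆ D := by
    intro z hz
    refine ⟨by simpa using hz.2.trans hρ, ?_⟩
    rintro rfl
    have := hz.1
    simp at this; linarith
  have hlow := annulus_lower b v hvd ε ρ hε hερ hρ
  have hvol := lintegral_abs_det_fderiv_eq_addHaar_image volume hAm
    (fun z hz => ((hgd z (hAD hz)).hasFDerivAt.restrictScalars ℝ).hasFDerivWithinAt)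
    (hinj.mono hAD)
  have hdet : ∀ z : ℂ, |(ContinuousLinearMap.restrictScalars ℝ
      (ContinuousLinearMap.toSpanSingleton ℂ (-(z ^ 2)⁻¹ + b + z * v z))).det|
      = ‖-(z ^ 2)⁻¹ + b + z * v z‖ ^ 2 := by
    intro z
    simp [ContinuousLinearMap.det, LinearMap.det_restrictScalars,
      Algebra.norm_complex_eq, Complex.normSq_eq_norm_sq]
  simp only [hdet] at hvol
  rw [← hA, hvol] at hlow
  have hsub : g '' A ⊆ ((LinearMap.id : ℂ →ₗ[ℝ] ℂ) +
      (LinearMap.mulLeft ℝ β) ∘ₗ Complex.conjAe.toLinearMap) '' closedBall 0 R := by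
    rintro _ ⟨z, hz, rfl⟩
    refine ⟨S (g z), ?_, ?_⟩
    · simpa using hcontain z hz.1 (hz.2.trans hρ)
    · have := hTS (g z)
      simpa [hT] using this
  have hup := hlow.trans (measure_mono hsub)
  rw [Measure.addHaar_image_linearMap, det_T, ← hd, abs_of_pos hdpos, Complex.volume_closedBall,
    ← ENNReal.ofReal_pow hRpos.le] at hup
  have hpi : (NNReal.pi : ENNReal) = ENNReal.ofReal Real.pi := by
    rw [← NNReal.coe_real_pi, ENNReal.ofReal_coe_nnreal]
  rw [hpi, ← ENNReal.ofReal_mul (by positivity), ← ENNReal.ofReal_mul (by positivity),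
    ENNReal.ofReal_le_ofReal_iff (by have := Real.pi_pos; positivity)] at hup
  have hd1 : d ≤ 1 := by rw [hd]; nlinarith
  have h7 : d * (R ^ 2 * Real.pi) ≤ Real.pi * R ^ 2 := by
    have : 0 ≤ R ^ 2 * Real.pi := by have := Real.pi_pos; positivity
    nlinarith
  exact le_of_mul_le_mul_left (hup.trans h7) Real.pi_pos

lemma area_thm (b : ℂ) (k g : ℂ → ℂ) (hk : DifferentiableOn ℂ k (ball 0 1))
    (hg : ∀ z, g z = z⁻¹ + (b * z + z ^ 2 * k z)) (hinj : InjOn g (ball 0 1 \ {0})) :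
    ‖b‖ ≤ 1 := by
  obtain ⟨C, hC⟩ := (isCompact_closedBall (0:ℂ) (1/2)).exists_bound_of_continuousOn
    (hk.continuousOn.mono (closedBall_subset_ball (by norm_num)))
  have hC0 : 0 ≤ C := (norm_nonneg _).trans (hC 0 (by simp))
  have h1 : ∀ ρ ∈ Ioo (1/2 : ℝ) 1, ‖b‖ ^ 2 * ρ ^ 2 ≤ (ρ ^ 2)⁻¹ := by
    intro ρ hρ
    have hev : ∀ᶠ ε in 𝓝[>] (0:ℝ), -(ρ ^ 2)⁻¹ + ‖b‖ ^ 2 * (ρ ^ 2 - ε ^ 2) ≤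
        4 * C * ε + 4 * C ^ 2 * ε ^ 4 := by
      have e1 : ∀ᶠ ε in 𝓝[>] (0:ℝ), ε < 1/2 :=
        (eventually_lt_nhds (by norm_num)).filter_mono nhdsWithin_le_nhds
      have e2 : ∀ᶠ ε in 𝓝[>] (0:ℝ), ‖b‖ * ε ^ 2 < 1/2 := by
        have : ContinuousAt (fun ε : ℝ => ‖b‖ * ε ^ 2) 0 := by fun_prop
        exact (this.eventually_lt_const (by norm_num)).filter_mono nhdsWithin_le_nhds
      filter_upwards [e1, e2, self_mem_nhdsWithin] with ε h1 h2 h3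
      have h3 : 0 < ε := h3
      have := area_ineq b k g hk hg hinj C ε ρ hC0 h3 (h1.trans hρ.1) hρ.2 h2.le
        (fun z hz => hC z (by simp [hz]; linarith))
      have h5 : (ε⁻¹ + 2 * C * ε ^ 2) ^ 2 = (ε^2)⁻¹ + 4 * C * ε + 4 * C ^ 2 * ε ^ 4 := by
        field_simp
        ring
      linarith
    have c1 : ContinuousAt (fun ε : ℝ => -(ρ ^ 2)⁻¹ + ‖b‖ ^ 2 * (ρ ^ 2 - ε ^ 2)) 0 := by fun_prop
    have c2 : ContinuousAt (fun ε : ℝ => 4 * C * ε + 4 * C ^ 2 * ε ^ 4) 0 := by fun_prop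
    have := le_of_tendsto_of_tendsto (c1.tendsto.mono_left nhdsWithin_le_nhds)
      (c2.tendsto.mono_left nhdsWithin_le_nhds) hev
    norm_num at this
    linarith
  have hev : ∀ᶠ ρ in 𝓝[<] (1:ℝ), ‖b‖ ^ 2 * ρ ^ 2 ≤ (ρ ^ 2)⁻¹ := by
    filter_upwards [Ioo_mem_nhdsLT (show (1/2:ℝ) < 1 by norm_num)] with ρ hρ using h1 ρ hρ
  have c1 : ContinuousAt (fun ρ : ℝ => ‖b‖ ^ 2 * ρ ^ 2) 1 := by fun_prop
  have c2 : ContinuousAt (fun ρ : ℝ => (ρ ^ 2)⁻¹) 1 :=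
    ContinuousAt.inv₀ (by fun_prop) (by norm_num)
  have := le_of_tendsto_of_tendsto (c1.tendsto.mono_left nhdsWithin_le_nhds)
      (c2.tendsto.mono_left nhdsWithin_le_nhds) hev
  norm_num at this
  exact this

theorem zalcman_univalent_real_coeffs_a2_a3
    (f : ℂ → ℂ) (a : ℕ → ℝ)
    (ha0 : a 0 = 0) (ha1 : a 1 = 1)
    (hf : ∀ z ∈ Metric.ball (0 : ℂ) 1, HasSum (fun k => (a k : ℂ) * z ^ k) (f z))
    (hinj : Set.InjOn f (Metric.ball (0 : ℂ) 1))
    (lam : ℝ) (hlam : 1 ≤ lam) :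
    |lam * a 2 ^ 2 - a 3| ≤ 4 * lam - 3 := by
  obtain ⟨e, he, hfe⟩ := ps_shift (fun k => (a k : ℂ)) f hf
  obtain ⟨e1, he1, hee1⟩ := ps_shift (fun k => (a (k + 1) : ℂ)) e he
  obtain ⟨e2, he2, hee2⟩ := ps_shift (fun k => (a (k + 1 + 1) : ℂ)) e1 he1
  obtain ⟨E, hE, heE⟩ := ps_shift (fun k => (a (k + 1 + 1 + 1) : ℂ)) e2 he2
  have hed := ps_diff _ _ he
  have he1d := ps_diff _ _ he1
  have hEd := ps_diff _ _ hE
  simp only [ha0, zero_add, ha1, Complex.ofReal_one, Complex.ofReal_zero] at hfe hee1 hee2 heE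
  norm_num at hee2 heE
  have h00 : (0:ℂ) ∈ ball (0:ℂ) 1 := mem_ball_self one_pos
  have he0 : e 0 = 1 := by rw [hee1 0 h00]; simp
  have hf0 : f 0 = 0 := by rw [hfe 0 h00]; simp
  have hene : ∀ z ∈ ball (0:ℂ) 1, e z ≠ 0 := by
    intro z hz h
    have : z = 0 := hinj hz h00 (by rw [hfe z hz, h, hf0]; simp)
    subst this
    rw [he0] at h; exact one_ne_zero h
  -- first application
  have hA : ‖(a 2 : ℂ) ^ 2 - a 3‖ ≤ 1 := by
    set b : ℂ := (a 2 : ℂ) ^ 2 - a 3 with hb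
    set k : ℂ → ℂ := fun z => -(E z * (1 - a 2 * z + b * z ^ 2) + (a 2 * b - a 3 * a 2) + a 3 * b * z)
      / e z with hk
    refine area_thm b k (fun z => z⁻¹ + (b * z + z ^ 2 * k z)) ?_ (fun _ => rfl) ?_
    · simp only [hk]
      refine DifferentiableOn.div ?_ hed hene
      fun_prop
    · have key : ∀ z ∈ ball (0:ℂ) 1 \ {0}, z⁻¹ + (b * z + z ^ 2 * k z) = (f z)⁻¹ + a 2 := by
        intro z hz
        have hz0 : z ≠ 0 := hz.2
        have hez := hene z hz.1
        have h1 : e z = 1 + a 2 * z + a 3 * z ^ 2 + z ^ 3 * E z := by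
          rw [hee1 z hz.1, hee2 z (by simpa using hz.1), heE z (by simpa using hz.1)]; ring
        rw [hfe z hz.1]
        simp only [hk]
        field_simp
        rw [h1, hb]
        ring
      intro x hx y hy hxy
      simp only [key x hx, key y hy] at hxy
      exact hinj hx.1 hy.1 (inv_injective (add_right_cancel hxy))
  -- second application
  have hB : ‖-(a 2 : ℂ) / 2‖ ≤ 1 := by
    obtain ⟨p, hpd, hp0, hpe⟩ := exists_sqrt e hed hene he0
    set m := dslope p 0 with hm
    have hmd : DifferentiableOn ℂ m (ball 0 1) :=
      (Complex.differentiableOn_dslope (isOpen_ball.mem_nhds h00)).2 hpd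
    set n := dslope m 0 with hn
    have hnd : DifferentiableOn ℂ n (ball 0 1) :=
      (Complex.differentiableOn_dslope (isOpen_ball.mem_nhds h00)).2 hmd
    have hpm : ∀ z, p z = 1 + z * m z := by
      intro z
      have := sub_smul_dslope p 0 z
      simp only [sub_zero, smul_eq_mul, hp0] at this
      rw [hm, this]; ring
    have hmn : ∀ z, m z = m 0 + z * n z := by
      intro z
      have := sub_smul_dslope m 0 z
      simp only [sub_zero, smul_eq_mul] at this
      rw [hn, this]; ring
    have hm0 : m 0 = -(a 2 : ℂ) / 2 := by
      have hcont : ∀ h : ℂ → ℂ, DifferentiableOn ℂ h (ball 0 1) → ContinuousAt h 0 := fun h hh =>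
        (hh.differentiableAt (isOpen_ball.mem_nhds h00)).continuousAt
      have c1 := hcont m hmd
      have c2 := hcont e hed
      have c3 := hcont e1 he1d
      have c4 : ContinuousAt (fun z => (2 * m z + z * m z ^ 2) * e z + e1 z) 0 := by fun_prop
      have hz : ∀ᶠ z in 𝓝[≠] (0:ℂ), (2 * m z + z * m z ^ 2) * e z + e1 z = 0 := by
        have : ball (0:ℂ) 1 ∈ 𝓝[≠] (0:ℂ) := nhdsWithin_le_nhds (isOpen_ball.mem_nhds h00)
        filter_upwards [this, self_mem_nhdsWithin] with z hz hz0
        have hz0 : z ≠ 0 := hz0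
        have h1 := hpe z hz
        rw [hpm z] at h1
        apply mul_left_cancel₀ hz0
        linear_combination h1 - hee1 z hz
      have h2 := tendsto_nhds_unique (c4.tendsto.mono_left nhdsWithin_le_nhds)
        ((tendsto_congr' hz).2 tendsto_const_nhds)
      have h3 : e1 0 = a 2 := by rw [hee2 0 (by simp)]; simp
      simp only [he0, h3] at h2
      linear_combination h2 / 2
    have hsq : ∀ z ∈ ball (0:ℂ) 1, z ^ 2 ∈ ball (0:ℂ) 1 := by
      intro z hz
      have hz : ‖z‖ < 1 := by simpa using hz
      have : ‖z ^ 2‖ < 1 := by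
        rw [norm_pow]; nlinarith [norm_nonneg z]
      simpa using this
    refine area_thm _ (fun z => z * n (z ^ 2)) (fun z => z⁻¹ + (-(a 2 : ℂ) / 2 * z
      + z ^ 2 * (z * n (z ^ 2)))) ?_ (fun _ => rfl) ?_
    · have : DifferentiableOn ℂ (fun z => n (z ^ 2)) (ball 0 1) :=
        hnd.comp (f := fun z : ℂ => z ^ 2) (by fun_prop) hsq
      exact differentiableOn_id.mul this
    · have key : ∀ z ∈ ball (0:ℂ) 1 \ {0}, z⁻¹ + (-(a 2 : ℂ) / 2 * z
          + z ^ 2 * (z * n (z ^ 2))) = p (z ^ 2) / z := by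
        intro z hz
        have hz0 : z ≠ 0 := hz.2
        rw [hpm, hmn, hm0]
        field_simp
      have key2 : ∀ z ∈ ball (0:ℂ) 1 \ {0}, (p (z ^ 2) / z) ^ 2 = (f (z ^ 2))⁻¹ := by
        intro z hz
        have hz0 : z ≠ 0 := hz.2
        have h1 := hpe _ (hsq z hz.1)
        have h2 := hene _ (hsq z hz.1)
        rw [hfe _ (hsq z hz.1)]
        field_simp
        exact h1
      intro x hx y hy hxy
      simp only [key x hx, key y hy] at hxy
      have h1 := key2 x hx
      rw [hxy, key2 y hy] at h1
      have h2 : y ^ 2 = x ^ 2 := hinj (hsq y hy.1) (hsq x hx.1) (inv_injective h1)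
      rcases sq_eq_sq_iff_eq_or_eq_neg.1 h2 with h | h
      · exact h.symm
      · exfalso
        have hx0 : x ≠ 0 := hx.2
        have hp : p (x ^ 2) ≠ 0 := by
          intro h0
          have := hpe _ (hsq x hx.1)
          rw [h0] at this; simp at this
        rw [h2, h, div_neg] at hxy
        have h5 : p (x ^ 2) / x ≠ 0 := div_ne_zero hp hx0
        apply h5
        linear_combination hxy / 2
  have hA' : |a 2 ^ 2 - a 3| ≤ 1 := by
    rw [← Real.norm_eq_abs, ← Complex.norm_real]; push_cast; exact hA
  have hB' : |-(a 2) / 2| ≤ 1 := by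
    rw [← Real.norm_eq_abs, ← Complex.norm_real]; push_cast; exact hB
  rw [abs_le] at hA' hB' ⊢
  have hsq : a 2 ^ 2 ≤ 4 := by nlinarith
  have hsq0 := sq_nonneg (a 2)
  constructor <;> nlinarith
end
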